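/- arXiv:2512.22696 — 2 statements merged into one kernel-verified Lean document; each statement's English description precedes it below -/
import Mathlib

section
/- Let a, b, c be positive integers with c² = a² + b² − ab. Then the ideal trapezoid with shorter parallel side c² and lateral sides ab (so with longer parallel side c² + ab = a² + b²) tiles into a² + b² + c² congruent copies of the triangle with side lengths (a, b, c). -/
noncomputable section

abbrev Plane := EuclideanSpace ℝ (Fin 2)

/-- The point (x, y) in the Euclidean plane. -/
def pt (x y : ℝ) : Plane := (WithLp.equiv 2 (Fin 2 → ℝ)).symm ![x, y]

/-- `Δ` is a triangle with side lengths `(p, q, r)`: the convex hull of points `P, Q, R`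
with `dist Q R = p`, `dist P R = q`, `dist P Q = r`. -/
def IsTriangle (p q r : ℝ) (Δ : Set Plane) : Prop :=
  ∃ P Q R : Plane, dist Q R = p ∧ dist P R = q ∧ dist P Q = r ∧
    Δ = convexHull ℝ {P, Q, R}

/-- `S` tiles into `N` congruent copies of the `(p, q, r)` triangle: there are isometries
`f 1, …, f N` of the plane and a triangle `Δ` with side lengths `(p, q, r)` such that
`S` is the union of the `f i '' Δ` and their interiors are pairwise disjoint. -/
def TilesInto (S : Set Plane) (N : ℕ) (p q r : ℝ) : Prop :=
  ∃ (f : Fin N → Plane ≃ᵢ Plane) (Δ : Set Plane),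
    IsTriangle p q r Δ ∧
    S = ⋃ i, f i '' Δ ∧
    ∀ i j : Fin N, i ≠ j → interior (f i '' Δ) ∩ interior (f j '' Δ) = ∅

/-- The ideal trapezoid with shorter parallel side `x` and lateral sides `ℓ`
(longer parallel side `x + ℓ`, base angles `π/3`). -/
def IdealTrapezoid (x ℓ : ℝ) : Set Plane :=
  convexHull ℝ {pt 0 0, pt (x + ℓ) 0, pt (x + ℓ/2) (ℓ * Real.sqrt 3 / 2),
    pt (ℓ/2) (ℓ * Real.sqrt 3 / 2)}

/-!
The point at distance `a²` from the left end of the longer parallel side cuts it into pieces of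
lengths `a²` and `b²`. Joining it to the two upper vertices divides the trapezoid into three
triangles, and by the law of cosines these are the `(a, b, c)` triangle scaled by `a`, `c` and `b`.
Lines parallel to the sides divide a triangle scaled by `n` into `n²` congruent copies of the
original, so `a² + c² + b²` tiles result; by side-side-side congruence the tiles of all three
triangles are images of a single one.
-/

section Separation

variable {E : Type*} [AddCommGroup E] [Module ℝ E] [TopologicalSpace E] [ContinuousAdd E]
  [ContinuousSMul ℝ E] {f : StrongDual ℝ E}

lemma disjoint_interior_of_le_of_ge (hf : f ≠ 0)
    {γ : ℝ} {s t : Set E} (hs : ∀ x ∈ s, f x ≤ γ) (ht : ∀ x ∈ t, γ ≤ f x) :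
    Disjoint (interior s) (interior t) := by
  have isOpen_image {u : Set E} : IsOpen (f '' interior u) :=
    f.isOpenMap_of_ne_zero hf _ isOpen_interior
  have image_left : f '' interior s ⊆ Set.Iio γ := by
    rw [← interior_Iic]
    exact interior_maximal (Set.image_subset_iff.2 fun x hx => hs x (interior_subset hx))
      isOpen_image
  have image_right : f '' interior t ⊆ Set.Ioi γ := by
    rw [← interior_Ici]
    exact interior_maximal (Set.image_subset_iff.2 fun x hx => ht x (interior_subset hx))
      isOpen_image
  exact Set.disjoint_left.2 fun x hxs hxt =>
    (Set.mem_Iio.1 (image_left (Set.mem_image_of_mem f hxs))).not_gt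
      (image_right (Set.mem_image_of_mem f hxt))

lemma disjoint_interior_convexHull_of_le_of_ge (hf : f ≠ 0)
    {γ : ℝ} {s t : Set E} (hs : ∀ x ∈ s, f x ≤ γ) (ht : ∀ x ∈ t, γ ≤ f x) :
    Disjoint (interior (convexHull ℝ s)) (interior (convexHull ℝ t)) :=
  disjoint_interior_of_le_of_ge hf
    (convexHull_min hs (convex_halfSpace_le f.isLinear γ))
    (convexHull_min ht (convex_halfSpace_ge f.isLinear γ))

lemma disjoint_interior_of_strips (hf : f ≠ 0)
    {m n : ℤ} (hmn : m ≠ n) {s t : Set E} (hs : ∀ x ∈ s, f x ∈ Set.Icc (m : ℝ) (m + 1))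
    (ht : ∀ x ∈ t, f x ∈ Set.Icc (n : ℝ) (n + 1)) :
    Disjoint (interior s) (interior t) := by
  wlog hlt : m < n generalizing m n s t
  · exact (this hmn.symm ht hs (hmn.lt_or_gt.resolve_left hlt)).symm
  have hle : (m : ℝ) + 1 ≤ n := by exact_mod_cast hlt
  exact disjoint_interior_of_le_of_ge hf (fun x hx => (hs x hx).2)
    fun x hx => hle.trans (ht x hx).1

end Separation

section AffineImage

lemma affineMap_apply_sub {V W : Type*} [AddCommGroup V] [Module ℝ V] [AddCommGroup W] [Module ℝ W]
    (A : V →ᵃ[ℝ] W) (x y : V) : A (x - y) = A x + A 0 - A y := by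
  have h := A.map_vadd 0 (x - y)
  rw [← vsub_eq_sub, A.linearMap_vsub] at h
  simp only [vsub_eq_sub, vadd_eq_add, add_zero] at h
  rw [h, sub_add_eq_add_sub]

lemma surjective_of_nonempty_interior_image {V W : Type*} [AddCommGroup V] [Module ℝ V]
    [NormedAddCommGroup W] [NormedSpace ℝ W] (A : V →ᵃ[ℝ] W) {s : Set V}
    (hs : (interior (A '' s)).Nonempty) : Function.Surjective A := by
  have span_le : affineSpan ℝ (interior (A '' s)) ≤ (⊤ : AffineSubspace ℝ V).map A :=
    affineSpan_le.2 <| interior_subset.trans <| by simp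
  rw [isOpen_interior.affineSpan_eq_top hs, top_le_iff] at span_le
  intro y
  obtain ⟨x, -, hx⟩ : y ∈ (⊤ : AffineSubspace ℝ V).map A := span_le ▸ AffineSubspace.mem_top ℝ W y
  exact ⟨x, hx⟩

lemma disjoint_interior_image_affineMap {V W : Type*} [NormedAddCommGroup V] [NormedSpace ℝ V]
    [FiniteDimensional ℝ V] [NormedAddCommGroup W] [NormedSpace ℝ W] [FiniteDimensional ℝ W]
    (hVW : Module.finrank ℝ V = Module.finrank ℝ W) (A : V →ᵃ[ℝ] W) {s t : Set V}
    (hst : Disjoint (interior s) (interior t)) :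
    Disjoint (interior (A '' s)) (interior (A '' t)) := by
  rcases (interior (A '' s)).eq_empty_or_nonempty with hempty | hne
  · simp [hempty]
  have hsurj := surjective_of_nonempty_interior_image A hne
  have hinj : Function.Injective A := A.linear_injective_iff.1 <|
    (LinearMap.injective_iff_surjective_of_finrank_eq_finrank hVW).2 <|
      A.linear_surjective_iff.2 hsurj
  let e : V ≃ₜ W := (AffineEquiv.ofBijective ⟨hinj, hsurj⟩).toContinuousAffineEquiv.toHomeomorph
  have interior_image (u : Set V) : interior (A '' u) = A '' interior u :=
    (e.image_interior u).symm
  rw [interior_image, interior_image]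
  exact Set.disjoint_image_of_injective hinj hst

end AffineImage

section SideSideSide

variable {V P : Type*} [NormedAddCommGroup V] [InnerProductSpace ℝ V] [MetricSpace P]
  [NormedAddTorsor V P]

lemma exists_affineIsometryEquiv_swap (p q : P) :
    ∃ F : P ≃ᵃⁱ[ℝ] P, F p = q ∧ ∀ x, dist x p = dist x q → F x = x := by
  let s := AffineSubspace.perpBisector p q
  have : Nonempty s := AffineSubspace.perpBisector_nonempty.to_subtype
  have : s.direction.HasOrthogonalProjection := by
    rw [AffineSubspace.direction_perpBisector]; infer_instance
  have hv : p -ᵥ midpoint ℝ p q ∈ s.directionᗮ := by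
    rw [AffineSubspace.direction_perpBisector, Submodule.orthogonal_orthogonal, left_vsub_midpoint,
      Submodule.mem_span_singleton]
    exact ⟨-⅟2, by rw [neg_smul, ← smul_neg, neg_vsub_eq_vsub_rev]⟩
  refine ⟨EuclideanGeometry.reflection s, ?_, fun x hx => ?_⟩
  · have h := EuclideanGeometry.reflection_orthogonal_vadd
      (AffineSubspace.midpoint_mem_perpBisector p q) hv
    rwa [vsub_vadd, left_vsub_midpoint, ← smul_neg, neg_vsub_eq_vsub_rev, ← right_vsub_midpoint,
      vsub_vadd] at h
  · exact (EuclideanGeometry.reflection_eq_self_iff x).2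
      (AffineSubspace.mem_perpBisector_iff_dist_eq.2 hx)

/-- The points are matched one at a time: the reflection moving the next one to its target fixes all
targets already reached. -/
lemma exists_affineIsometryEquiv_of_congruent {ι : Type*} [Finite ι] {v w : ι → P}
    (h : Congruent v w) : ∃ F : P ≃ᵃⁱ[ℝ] P, ∀ i, F (v i) = w i := by
  classical
  have := Fintype.ofFinite ι
  suffices ∀ s : Finset ι, ∃ F : P ≃ᵃⁱ[ℝ] P, ∀ i ∈ s, F (v i) = w i by
    simpa using this Finset.univ
  intro s
  induction s using Finset.induction_on with
  | empty => exact ⟨.refl ℝ P, by simp⟩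
  | insert k s _ ih =>
    obtain ⟨F, hF⟩ := ih
    obtain ⟨G, hGk, hG⟩ := exists_affineIsometryEquiv_swap (F (v k)) (w k)
    refine ⟨F.trans G, fun i hi => ?_⟩
    rcases Finset.mem_insert.1 hi with rfl | his
    · exact hGk
    have hdist : dist (w i) (F (v k)) = dist (w i) (w k) := by
      rw [← hF i his, F.dist_map, hF i his, h.dist_eq]
    exact (congrArg G (hF i his)).trans (hG _ hdist)

end SideSideSide

section ConvexHull

variable {E : Type*} [AddCommGroup E] [Module ℝ E]

lemma segment_subset_union_of_mem {A B M : E} (hM : M ∈ segment ℝ A B) :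
    segment ℝ A B ⊆ segment ℝ A M ∪ segment ℝ M B := by
  rw [← insert_endpoints_openSegment]
  have hM' : M ∈ Set.range (AffineMap.lineMap A B : ℝ → E) :=
    Set.image_subset_range _ _ (segment_eq_image_lineMap ℝ A B ▸ hM)
  refine Set.insert_subset (.inl (left_mem_segment ℝ A M)) <|
    Set.insert_subset (.inr (right_mem_segment ℝ M B)) <|
    (openSegment_subset_union A B hM').trans <|
    Set.insert_subset (.inl (right_mem_segment ℝ A M)) <|
    Set.union_subset_union (openSegment_subset_segment ℝ A M) (openSegment_subset_segment ℝ M B)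

lemma convexHull_pair_union_eq_union {A B M : E} (hM : M ∈ segment ℝ A B) {s : Set E}
    (hs : s.Nonempty) :
    convexHull ℝ ({A, B} ∪ s) = convexHull ℝ ({A, M} ∪ s) ∪ convexHull ℝ ({M, B} ∪ s) := by
  have hne (X Y : E) : ({X, Y} : Set E).Nonempty := Set.insert_nonempty _ _
  have hleft := (convex_segment A B).segment_subset (left_mem_segment ℝ A B) hM
  have hright := (convex_segment A B).segment_subset hM (right_mem_segment ℝ A B)
  rw [convexHull_union (hne A B) hs, convexHull_union (hne A M) hs, convexHull_union (hne M B) hs,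
    ← convexJoin_union_left]
  simp only [convexHull_pair]
  rw [(segment_subset_union_of_mem hM).antisymm (Set.union_subset hleft hright)]

lemma convexHull_quadrilateral_eq_union {A B C D : E}
    (h : (segment ℝ A C ∩ segment ℝ B D).Nonempty) :
    convexHull ℝ {A, B, C, D} = convexHull ℝ {A, B, D} ∪ convexHull ℝ {C, B, D} := by
  obtain ⟨M, hMAC, hMBD⟩ := h
  have hM (X : E) : M ∈ convexHull ℝ {X, B, D} :=
    convexHull_mono (Set.subset_insert X {B, D}) (by rwa [convexHull_pair])
  have absorb (X : E) : convexHull ℝ ({X, M} ∪ {B, D}) = convexHull ℝ {X, B, D} := by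
    refine (convexHull_min ?_ (convex_convexHull ℝ _)).antisymm (convexHull_mono ?_)
    · simp only [Set.insert_union, Set.singleton_union]
      rw [Set.insert_comm X M]
      exact Set.insert_subset (hM X) (subset_convexHull ℝ _)
    · simp only [Set.insert_union, Set.singleton_union]
      exact Set.insert_subset_insert (Set.subset_insert _ _)
  have reorder : ({A, B, C, D} : Set E) = {A, C} ∪ {B, D} := by
    rw [Set.insert_union, Set.singleton_union, Set.insert_comm B C]
  rw [reorder, convexHull_pair_union_eq_union hMAC (Set.insert_nonempty B {D}), absorb,
    Set.pair_comm M C, absorb]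

lemma segment_inter_segment_nonempty_of_sameRay {A B C D : E}
    (h : SameRay ℝ (B - A) (C - D)) : (segment ℝ A C ∩ segment ℝ B D).Nonempty := by
  obtain ⟨α, β, hα, hβ, hαβ, hBA, hCD⟩ := h.exists_eq_smul_add
  have key : β • (B - A) = α • (C - D) := by
    generalize B - A + (C - D) = w at hBA hCD
    rw [hBA, hCD, smul_comm]
  have hmeet : β • B + α • D = β • A + α • C := by
    rw [smul_sub, smul_sub, sub_eq_sub_iff_add_eq_add] at key
    rw [key, add_comm]
  exact ⟨β • A + α • C, ⟨β, α, hβ, hα, by rw [add_comm, hαβ], rfl⟩,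
    ⟨β, α, hβ, hα, by rw [add_comm, hαβ], hmeet⟩⟩

lemma convexHull_trapezoid_eq_union {A M B C D : E} (hM : SameRay ℝ (M - A) (B - M))
    (hleft : SameRay ℝ (M - A) (C - D)) (hright : SameRay ℝ (B - M) (C - D)) :
    convexHull ℝ {A, B, C, D} =
      convexHull ℝ {D, M, A} ∪ (convexHull ℝ {C, D, M} ∪ convexHull ℝ {M, C, B}) := by
  have split_base : convexHull ℝ {A, B, C, D} =
      convexHull ℝ {A, M, C, D} ∪ convexHull ℝ {M, B, C, D} := by
    simpa only [Set.insert_union, Set.singleton_union] using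
      convexHull_pair_union_eq_union (mem_segment_iff_sameRay.2 hM) (Set.insert_nonempty C {D})
  have reverse (X Y Z : E) : ({X, Y, Z} : Set E) = {Z, Y, X} := by
    rw [Set.insert_comm, Set.pair_comm X Z, Set.insert_comm]
  have split_left : convexHull ℝ {A, M, C, D} =
      convexHull ℝ {D, M, A} ∪ convexHull ℝ {C, D, M} := by
    rw [convexHull_quadrilateral_eq_union (segment_inter_segment_nonempty_of_sameRay hleft),
      reverse A, Set.pair_comm M D]
  have split_right : convexHull ℝ {M, B, C, D} =
      convexHull ℝ {C, D, M} ∪ convexHull ℝ {M, C, B} := by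
    have reorder : ({M, B, C, D} : Set E) = {D, C, B, M} := by
      rw [reverse B, Set.insert_comm M D, Set.insert_comm M C, Set.pair_comm M B]
    rw [reorder,
      convexHull_quadrilateral_eq_union (segment_inter_segment_nonempty_of_sameRay hright.symm),
      Set.insert_comm D C, reverse B]
  rw [split_base, split_left, split_right, Set.union_assoc,
    ← Set.union_assoc (convexHull ℝ {C, D, M}), Set.union_self]

end ConvexHull

section TriangularGrid

/-- The cell of the triangular grid on `ℝ × ℝ` cut out by the unit strips with indices `i`, `j`, `k`
in the three grid directions. It is a triangle for `k = i - j` and `k = i - j - 1`, and has empty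
interior otherwise. -/
def gridCell (i j k : ℤ) : Set (ℝ × ℝ) :=
  {z | z.1 ∈ Set.Icc (i : ℝ) (i + 1) ∧ z.2 ∈ Set.Icc (j : ℝ) (j + 1) ∧
    z.1 - z.2 ∈ Set.Icc (k : ℝ) (k + 1)}

/-- The triangle of the triangular grid with vertices `(0, 0)`, `(n, 0)`, `(n, n)`. -/
def gridTriangle (n : ℕ) : Set (ℝ × ℝ) :=
  {z | 0 ≤ z.2 ∧ z.2 ≤ z.1 ∧ z.1 ≤ n}

/-- An enumeration by `Fin n × Fin n` of the triangular cells contained in `gridTriangle n`: pairs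
with `j ≤ i` index the translates of `gridCell 0 0 0`, the others index its point reflections. -/
def gridTile (i j : ℕ) : Set (ℝ × ℝ) :=
  if j ≤ i then gridCell i j (i - j) else gridCell j i (j - i - 1)

lemma convex_gridTriangle (n : ℕ) : Convex ℝ (gridTriangle n) := by
  rintro z ⟨hz₀, hz, hzn⟩ w ⟨hw₀, hw, hwn⟩ α β hα hβ hαβ
  refine ⟨by simp only [Prod.snd_add, Prod.smul_snd]; positivity, ?_, ?_⟩
  · simp only [Prod.fst_add, Prod.smul_fst, Prod.snd_add, Prod.smul_snd]
    gcongr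
  · exact (convex_Iic (n : ℝ)) hzn hwn hα hβ hαβ

lemma gridTriangle_eq_convexHull {n : ℕ} (hn : n ≠ 0) :
    gridTriangle n = convexHull ℝ {(0, 0), ((n : ℝ), 0), ((n : ℝ), (n : ℝ))} := by
  have hpos : (0 : ℝ) < n := by positivity
  refine Set.Subset.antisymm (fun z ⟨hz₀, hz, hzn⟩ => ?_)
    (convexHull_min ?_ (convex_gridTriangle n))
  · refine mem_convexHull_of_exists_fintype ![1 - z.1 / n, z.1 / n - z.2 / n, z.2 / n]
      ![(0, 0), ((n : ℝ), 0), ((n : ℝ), (n : ℝ))] ?_ ?_ ?_ ?_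
    · simpa [Fin.forall_fin_succ, div_le_one hpos, div_le_div_iff_of_pos_right hpos, hpos.le] using
        ⟨hzn, hz, by positivity⟩
    · simp [Fin.sum_univ_three]
    · simp [Fin.forall_fin_succ]
    · ext <;> simp [Fin.sum_univ_three, sub_mul, hpos.ne']
  · simp [Set.insert_subset_iff, gridTriangle]

lemma gridCell_zero : gridCell 0 0 0 = convexHull ℝ {(0, 0), (1, 0), (1, 1)} := by
  have h := gridTriangle_eq_convexHull one_ne_zero
  rw [Nat.cast_one] at h
  rw [← h]
  ext z
  simp only [gridCell, gridTriangle, Set.mem_Icc, Set.mem_ofPred_eq, Int.cast_zero, Nat.cast_one]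
  constructor
  · rintro ⟨⟨-, hs⟩, ⟨ht, -⟩, hst, -⟩
    exact ⟨ht, by linarith, by linarith⟩
  · rintro ⟨ht, hts, hs⟩
    refine ⟨⟨?_, ?_⟩, ⟨?_, ?_⟩, ?_, ?_⟩ <;> linarith

lemma gridCell_eq_image_add (i j : ℤ) :
    gridCell i j (i - j) = (fun z => ((i : ℝ), (j : ℝ)) + z) '' gridCell 0 0 0 := by
  ext z
  rw [Set.image_add_left, Set.mem_preimage]
  simp only [gridCell, Set.mem_Icc, Set.mem_ofPred_eq, Prod.fst_add, Prod.snd_add, Prod.fst_neg,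
    Prod.snd_neg]
  push_cast
  grind

lemma gridCell_eq_image_sub (i j : ℤ) :
    gridCell i j (i - j - 1) = (fun z => ((i : ℝ) + 1, (j : ℝ) + 1) - z) '' gridCell 0 0 0 := by
  ext z
  rw [Set.mem_image_iff_of_inverse (sub_sub_cancel _) (sub_sub_cancel _)]
  simp only [gridCell, Set.mem_Icc, Set.mem_ofPred_eq, Prod.fst_sub, Prod.snd_sub]
  push_cast
  grind

lemma disjoint_interior_gridCell {i j k i' j' k' : ℤ} (h : i ≠ i' ∨ j ≠ j' ∨ k ≠ k') :
    Disjoint (interior (gridCell i j k)) (interior (gridCell i' j' k')) := by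
  have fst_ne : ContinuousLinearMap.fst ℝ ℝ ℝ ≠ 0 := fun h => by simpa using congr($h (1, 0))
  have snd_ne : ContinuousLinearMap.snd ℝ ℝ ℝ ≠ 0 := fun h => by simpa using congr($h (0, 1))
  have sub_ne : ContinuousLinearMap.fst ℝ ℝ ℝ - ContinuousLinearMap.snd ℝ ℝ ℝ ≠ 0 :=
    fun h => by simpa using congr($h (1, 0))
  rcases h with h | h | h
  · exact disjoint_interior_of_strips fst_ne h (fun z hz => hz.1) fun z hz => hz.1
  · exact disjoint_interior_of_strips snd_ne h (fun z hz => hz.2.1) fun z hz => hz.2.1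
  · exact disjoint_interior_of_strips sub_ne h (fun z hz => hz.2.2) fun z hz => hz.2.2

lemma disjoint_interior_gridTile {i j i' j' : ℕ} (h : (i, j) ≠ (i', j')) :
    Disjoint (interior (gridTile i j)) (interior (gridTile i' j')) := by
  rw [Ne, Prod.mk.injEq] at h
  unfold gridTile
  split_ifs <;> exact disjoint_interior_gridCell (by omega)

lemma mem_Icc_natCeil_sub_one {s : ℝ} (hs : 0 ≤ s) :
    s ∈ Set.Icc ((⌈s⌉₊ - 1 : ℕ) : ℝ) ((⌈s⌉₊ - 1 : ℕ) + 1) := by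
  have hceil : (⌈s⌉₊ : ℝ) ≤ (⌈s⌉₊ - 1 : ℕ) + 1 := by exact_mod_cast le_tsub_add
  refine ⟨?_, (Nat.le_ceil s).trans hceil⟩
  rcases hs.eq_or_lt with rfl | hpos
  · simp
  · exact (Nat.lt_ceil.1 (Nat.sub_one_lt (Nat.ceil_pos.2 hpos).ne')).le

lemma gridTile_subset_gridTriangle {n i j : ℕ} (hi : i < n) (hj : j < n) :
    gridTile i j ⊆ gridTriangle n := by
  have hi' : (i : ℝ) + 1 ≤ n := by exact_mod_cast hi
  have hj' : (j : ℝ) + 1 ≤ n := by exact_mod_cast hj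
  unfold gridTile
  split_ifs with hji
  · have hji' : (j : ℝ) ≤ i := by exact_mod_cast hji
    rintro z ⟨hs, ht, hst⟩
    push_cast at hs ht hst
    exact ⟨by linarith [ht.1, j.cast_nonneg (α := ℝ)], by linarith [hst.1], by linarith [hs.2]⟩
  · have hij' : (i : ℝ) + 1 ≤ j := by exact_mod_cast not_le.1 hji
    rintro z ⟨hs, ht, hst⟩
    push_cast at hs ht hst
    exact ⟨by linarith [ht.1, i.cast_nonneg (α := ℝ)], by linarith [hst.1], by linarith [hs.2]⟩

lemma exists_mem_gridTile {n : ℕ} (hn : n ≠ 0) {z : ℝ × ℝ} (hz : z ∈ gridTriangle n) :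
    ∃ i j : Fin n, z ∈ gridTile i j := by
  obtain ⟨ht₀, hts, hsn⟩ := hz
  have index_lt {x : ℝ} (hx : x ≤ n) : ⌈x⌉₊ - 1 < n := by
    have := Nat.ceil_le.2 hx
    omega
  -- Rounding up puts `z.1 = n` into the last strip; truncated subtraction puts `0` into the first.
  let i : Fin n := ⟨⌈z.1⌉₊ - 1, index_lt hsn⟩
  let j : Fin n := ⟨⌈z.2⌉₊ - 1, index_lt (hts.trans hsn)⟩
  have hs : z.1 ∈ Set.Icc (i : ℝ) (i + 1) := mem_Icc_natCeil_sub_one (ht₀.trans hts)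
  have ht : z.2 ∈ Set.Icc (j : ℝ) (j + 1) := mem_Icc_natCeil_sub_one ht₀
  have hji : (j : ℕ) ≤ i := Nat.sub_le_sub_right (Nat.ceil_mono hts) 1
  rcases le_or_gt ((i : ℝ) - j) (z.1 - z.2) with hle | hlt
  · refine ⟨i, j, ?_⟩
    rw [gridTile, if_pos hji]
    exact ⟨hs, ht, by push_cast; exact hle, by push_cast; linarith [hs.2, ht.1]⟩
  · have hne : ¬ i ≤ j := fun hij => by
      rw [hij.antisymm hji] at hlt
      linarith
    refine ⟨j, i, ?_⟩
    rw [gridTile, if_neg (mt Fin.le_def.2 hne)]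
    exact ⟨hs, ht, by push_cast; linarith [hs.1, ht.2], by push_cast; linarith⟩

lemma gridTriangle_eq_iUnion_gridTile {n : ℕ} (hn : n ≠ 0) :
    gridTriangle n = ⋃ p : Fin n × Fin n, gridTile p.1 p.2 := by
  refine Set.Subset.antisymm (fun z hz => ?_) <|
    Set.iUnion_subset fun p => gridTile_subset_gridTriangle p.1.2 p.2.2
  obtain ⟨i, j, hij⟩ := exists_mem_gridTile hn hz
  exact Set.mem_iUnion.2 ⟨(i, j), hij⟩

lemma exists_isometryEquiv_image_gridTile {E : Type*} [NormedAddCommGroup E] [NormedSpace ℝ E]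
    (A : ℝ × ℝ →ᵃ[ℝ] E) (i j : ℕ) :
    ∃ f : E ≃ᵢ E, A '' gridTile i j = f '' (A '' gridCell 0 0 0) := by
  unfold gridTile
  split_ifs
  · refine ⟨IsometryEquiv.addLeft (A.linear (i, j)), ?_⟩
    rw [gridCell_eq_image_add, Set.image_image, Set.image_image]
    exact Set.image_congr fun z _ => A.map_vadd z (i, j)
  · refine ⟨IsometryEquiv.subLeft (A (j + 1, i + 1) + A 0), ?_⟩
    rw [gridCell_eq_image_sub, Set.image_image, Set.image_image]
    exact Set.image_congr fun z _ => affineMap_apply_sub A (j + 1, i + 1) z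

end TriangularGrid

section Tilings

lemma IsTriangle.exists_isometryEquiv_image_eq {p q r : ℝ} {Δ Δ' : Set Plane}
    (h : IsTriangle p q r Δ) (h' : IsTriangle p q r Δ') : ∃ f : Plane ≃ᵢ Plane, f '' Δ = Δ' := by
  obtain ⟨P, Q, R, hQR, hPR, hPQ, rfl⟩ := h
  obtain ⟨P', Q', R', hQR', hPR', hPQ', rfl⟩ := h'
  obtain ⟨F, hF⟩ := exists_affineIsometryEquiv_of_congruent <|
    EuclideanGeometry.side_side_side (hPQ.trans hPQ'.symm) (hQR.trans hQR'.symm)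
      (by rw [dist_comm R, dist_comm R', hPR, hPR'])
  refine ⟨F.toIsometryEquiv, ?_⟩
  have image_hull := F.toAffineEquiv.toAffineMap.image_convexHull {P, Q, R}
  simp only [Set.image_insert_eq, Set.image_singleton] at image_hull
  have vertices : F P = P' ∧ F Q = Q' ∧ F R = R' := ⟨hF 0, hF 1, hF 2⟩
  rw [← vertices.1, ← vertices.2.1, ← vertices.2.2]
  exact image_hull

lemma tilesInto_of_fintype {ι : Type*} [Fintype ι] {f : ι → Plane ≃ᵢ Plane} {Δ S : Set Plane}
    {N : ℕ} (hN : Fintype.card ι = N) {p q r : ℝ} (hΔ : IsTriangle p q r Δ)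
    (hS : S = ⋃ i, f i '' Δ)
    (hf : Pairwise fun i j => Disjoint (interior (f i '' Δ)) (interior (f j '' Δ))) :
    TilesInto S N p q r := by
  let e := Fintype.equivFinOfCardEq hN
  refine ⟨f ∘ e.symm, Δ, hΔ, ?_, fun i j hij => ?_⟩
  · rw [hS]
    exact (e.symm.surjective.iUnion_comp fun i => f i '' Δ).symm
  · exact (hf (e.symm.injective.ne hij)).inter_eq

lemma TilesInto.union {S T : Set Plane} {N M : ℕ} {p q r : ℝ} (hS : TilesInto S N p q r)
    (hT : TilesInto T M p q r) (hST : Disjoint (interior S) (interior T)) :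
    TilesInto (S ∪ T) (N + M) p q r := by
  obtain ⟨f, Δ, hΔ, rfl, hf⟩ := hS
  obtain ⟨g, Δ', hΔ', rfl, hg⟩ := hT
  obtain ⟨k, rfl⟩ := hΔ.exists_isometryEquiv_image_eq hΔ'
  have image_trans (j : Fin M) : k.trans (g j) '' Δ = g j '' (k '' Δ) := Set.image_comp (g j) k Δ
  have disjoint_left_right (i : Fin N) (j : Fin M) :
      Disjoint (interior (f i '' Δ)) (interior (g j '' (k '' Δ))) :=
    hST.mono (interior_mono (Set.subset_iUnion (fun i => f i '' Δ) i))
      (interior_mono (Set.subset_iUnion (fun j => g j '' (k '' Δ)) j))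
  refine tilesInto_of_fintype (f := Sum.elim f fun j => k.trans (g j)) (by simp) hΔ ?_ ?_
  · simp only [Set.iUnion_sum, Sum.elim_inl, Sum.elim_inr, image_trans]
  · rintro (i | i) (j | j) hij <;> simp only [Sum.elim_inl, Sum.elim_inr, image_trans]
    · exact Set.disjoint_iff_inter_eq_empty.2 (hf i j fun h => hij (congrArg _ h))
    · exact disjoint_left_right i j
    · exact (disjoint_left_right j i).symm
    · exact Set.disjoint_iff_inter_eq_empty.2 (hg i j fun h => hij (congrArg _ h))

lemma tilesInto_image_gridTriangle {n : ℕ} (hn : n ≠ 0) {p q r : ℝ} (A : ℝ × ℝ →ᵃ[ℝ] Plane)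
    (hA : IsTriangle p q r (A '' gridCell 0 0 0)) :
    TilesInto (A '' gridTriangle n) (n ^ 2) p q r := by
  choose f hf using exists_isometryEquiv_image_gridTile A
  refine tilesInto_of_fintype (f := fun ij : Fin n × Fin n => f ij.1 ij.2) (by simp [sq]) hA ?_
    fun ij ij' hne => ?_
  · simp only [gridTriangle_eq_iUnion_gridTile hn, Set.image_iUnion, hf]
  · simp only [← hf]
    refine disjoint_interior_image_affineMap (by simp) A (disjoint_interior_gridTile ?_)
    simpa [Prod.ext_iff, Fin.ext_iff] using hne

lemma exists_affineMap_prod_apply_eq {E : Type*} [AddCommGroup E] [Module ℝ E] (P u v : E) :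
    ∃ A : ℝ × ℝ →ᵃ[ℝ] E, ∀ s t : ℝ, A (s, t) = P + (s • u + t • v) :=
  ⟨AffineMap.const ℝ _ P +
    ((LinearMap.toSpanSingleton ℝ E u).coprod (LinearMap.toSpanSingleton ℝ E v)).toAffineMap,
    fun s t => by simp⟩

lemma IsTriangle.tilesInto_sq {n : ℕ} (hn : n ≠ 0) {p q r : ℝ} {Δ : Set Plane}
    (h : IsTriangle (n * p) (n * q) (n * r) Δ) : TilesInto Δ (n ^ 2) p q r := by
  obtain ⟨P, Q, R, hQR, hPR, hPQ, rfl⟩ := h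
  have hn' : (n : ℝ) ≠ 0 := by exact_mod_cast hn
  obtain ⟨A, hA⟩ := exists_affineMap_prod_apply_eq P ((n : ℝ)⁻¹ • (Q - P)) ((n : ℝ)⁻¹ • (R - Q))
  have image_triangle : A '' gridTriangle n = convexHull ℝ {P, Q, R} := by
    rw [gridTriangle_eq_convexHull hn, A.image_convexHull, Set.image_insert_eq, Set.image_pair]
    simp [hA, hn']
  have dist_scaled {X Y : Plane} {d : ℝ} (hXY : dist X Y = n * d) :
      dist (P + (n : ℝ)⁻¹ • (X - P)) (P + (n : ℝ)⁻¹ • (Y - P)) = d := by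
    rw [dist_add_left, dist_smul₀, dist_sub_right, hXY, norm_inv, Real.norm_natCast,
      inv_mul_cancel_left₀ hn']
  have image_cell : A '' gridCell 0 0 0 = convexHull ℝ
      {P + (n : ℝ)⁻¹ • (P - P), P + (n : ℝ)⁻¹ • (Q - P), P + (n : ℝ)⁻¹ • (R - P)} := by
    rw [gridCell_zero, A.image_convexHull, Set.image_insert_eq, Set.image_pair]
    simp [hA, ← smul_add]
  exact image_triangle ▸ tilesInto_image_gridTriangle hn A
    ⟨_, _, _, dist_scaled hQR, dist_scaled hPR, dist_scaled hPQ, image_cell⟩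

end Tilings

section Trapezoid

lemma dist_pt {x y x' y' d : ℝ} (hd : 0 ≤ d) (h : (x - x') ^ 2 + (y - y') ^ 2 = d ^ 2) :
    dist (pt x y) (pt x' y') = d := by
  rw [EuclideanSpace.dist_eq, Fin.sum_univ_two, Real.dist_eq, Real.dist_eq, sq_abs, sq_abs,
    Real.sqrt_eq_iff_eq_sq (by positivity) hd]
  exact h

lemma sameRay_pt_sub_pt {x₁ x₂ x₃ x₄ : ℝ} (y y' : ℝ) (h₁ : x₁ ≤ x₂) (h₂ : x₃ ≤ x₄) :
    SameRay ℝ (pt x₂ y - pt x₁ y) (pt x₄ y' - pt x₃ y') := by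
  have horizontal (s t u : ℝ) : pt s u - pt t u = (s - t) • pt 1 0 := by
    ext i
    fin_cases i <;> simp [pt]
  rw [horizontal, horizontal]
  exact ((SameRay.refl (pt 1 0)).nonneg_smul_left (sub_nonneg.2 h₁)).nonneg_smul_right
    (sub_nonneg.2 h₂)

/-- The linear functional `(x, y) ↦ m x + n y` on the plane. -/
def planeFunctional (m n : ℝ) : StrongDual ℝ Plane :=
  m • EuclideanSpace.proj 0 + n • EuclideanSpace.proj 1

lemma planeFunctional_pt (m n x y : ℝ) : planeFunctional m n (pt x y) = m * x + n * y := rfl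

lemma planeFunctional_ne_zero {m n : ℝ} (hm : m ≠ 0) : planeFunctional m n ≠ 0 := fun h =>
  hm <| by simpa [planeFunctional_pt] using congr($h (pt 1 0))

/-- The triangle with side lengths `(a², ab, ac)` at the left end of the ideal trapezoid. -/
def leftTriangle (a b : ℝ) : Set Plane :=
  convexHull ℝ {pt (a * b / 2) (a * b * √3 / 2), pt (a ^ 2) 0, pt 0 0}

/-- The triangle with side lengths `(ca, cb, c²)` in the middle of the ideal trapezoid, standing on
its vertex. -/
def middleTriangle (a b c : ℝ) : Set Plane :=
  convexHull ℝ {pt (c ^ 2 + a * b / 2) (a * b * √3 / 2), pt (a * b / 2) (a * b * √3 / 2),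
    pt (a ^ 2) 0}

/-- The triangle with side lengths `(ba, b², bc)` at the right end of the ideal trapezoid. -/
def rightTriangle (a b c : ℝ) : Set Plane :=
  convexHull ℝ {pt (a ^ 2) 0, pt (c ^ 2 + a * b / 2) (a * b * √3 / 2), pt (c ^ 2 + a * b) 0}

variable {a b c : ℝ}

lemma idealTrapezoid_eq_union (h : c ^ 2 + a * b = a ^ 2 + b ^ 2) :
    IdealTrapezoid (c ^ 2) (a * b) =
      leftTriangle a b ∪ (middleTriangle a b c ∪ rightTriangle a b c) := by
  have base_le : a ^ 2 ≤ c ^ 2 + a * b := by nlinarith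
  have top_le : a * b / 2 ≤ c ^ 2 + a * b / 2 := by nlinarith
  exact convexHull_trapezoid_eq_union (sameRay_pt_sub_pt 0 0 (sq_nonneg a) base_le)
    (sameRay_pt_sub_pt _ _ (sq_nonneg a) top_le) (sameRay_pt_sub_pt _ _ base_le top_le)

lemma isTriangle_leftTriangle (ha : 0 ≤ a) (hb : 0 ≤ b) (hc : 0 ≤ c)
    (h : c ^ 2 + a * b = a ^ 2 + b ^ 2) :
    IsTriangle (a * a) (a * b) (a * c) (leftTriangle a b) := by
  have h3 : √3 ^ 2 = 3 := Real.sq_sqrt (by norm_num)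
  exact ⟨_, _, _, dist_pt (by positivity) (by grind), dist_pt (by positivity) (by grind),
    dist_pt (by positivity) (by grind), rfl⟩

lemma isTriangle_middleTriangle (ha : 0 ≤ a) (hb : 0 ≤ b) (hc : 0 ≤ c)
    (h : c ^ 2 + a * b = a ^ 2 + b ^ 2) :
    IsTriangle (c * a) (c * b) (c * c) (middleTriangle a b c) := by
  have h3 : √3 ^ 2 = 3 := Real.sq_sqrt (by norm_num)
  exact ⟨_, _, _, dist_pt (by positivity) (by grind), dist_pt (by positivity) (by grind),
    dist_pt (by positivity) (by grind), rfl⟩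

lemma isTriangle_rightTriangle (ha : 0 ≤ a) (hb : 0 ≤ b) (hc : 0 ≤ c)
    (h : c ^ 2 + a * b = a ^ 2 + b ^ 2) :
    IsTriangle (b * a) (b * b) (b * c) (rightTriangle a b c) := by
  have h3 : √3 ^ 2 = 3 := Real.sq_sqrt (by norm_num)
  exact ⟨_, _, _, dist_pt (by positivity) (by grind), dist_pt (by positivity) (by grind),
    dist_pt (by positivity) (by grind), rfl⟩

lemma disjoint_interior_leftTriangle (hb : 0 < b) (h : c ^ 2 + a * b = a ^ 2 + b ^ 2) :
    Disjoint (interior (leftTriangle a b))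
      (interior (middleTriangle a b c ∪ rightTriangle a b c)) := by
  -- The common side lies on the line `√3 b x + (2a - b) y = √3 a² b`.
  have hf : planeFunctional (√3 * b) (2 * a - b) ≠ 0 := planeFunctional_ne_zero (by positivity)
  refine Disjoint.mono_right (interior_mono (Set.union_subset (convexHull_mono
    Set.subset_union_left) (convexHull_mono Set.subset_union_right))) <|
    disjoint_interior_convexHull_of_le_of_ge hf (γ := √3 * (a ^ 2 * b)) ?_ ?_
  · simp only [Set.forall_mem_insert, Set.mem_singleton_iff, forall_eq, planeFunctional_pt]
    have : 0 ≤ √3 * (a ^ 2 * b) := by positivity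
    refine ⟨?_, ?_, ?_⟩ <;> linarith
  · simp only [Set.insert_union, Set.singleton_union, Set.forall_mem_insert, Set.mem_singleton_iff,
      forall_eq, planeFunctional_pt]
    have : 0 ≤ √3 * (b * c ^ 2) := by positivity
    have : 0 ≤ √3 * b ^ 3 := by positivity
    have : √3 * b * (c ^ 2 + a * b) = √3 * b * (a ^ 2 + b ^ 2) := by rw [h]
    refine ⟨?_, ?_, ?_, ?_, ?_, ?_⟩ <;> linarith

lemma disjoint_interior_middleTriangle_rightTriangle (ha : 0 < a)
    (h : c ^ 2 + a * b = a ^ 2 + b ^ 2) :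
    Disjoint (interior (middleTriangle a b c)) (interior (rightTriangle a b c)) := by
  -- The common side lies on the line `√3 a x + (a - 2b) y = √3 a³`.
  have hf : planeFunctional (√3 * a) (a - 2 * b) ≠ 0 := planeFunctional_ne_zero (by positivity)
  have : √3 * a * (c ^ 2 + a * b) = √3 * a * (a ^ 2 + b ^ 2) := by rw [h]
  refine disjoint_interior_convexHull_of_le_of_ge hf (γ := √3 * a ^ 3) ?_ ?_ <;>
    simp only [Set.forall_mem_insert, Set.mem_singleton_iff, forall_eq, planeFunctional_pt]
  · have : 0 ≤ √3 * a * c ^ 2 := by positivity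
    refine ⟨?_, ?_, ?_⟩ <;> linarith
  · have : 0 ≤ √3 * a * b ^ 2 := by positivity
    refine ⟨?_, ?_, ?_⟩ <;> linarith

end Trapezoid

theorem stmt6 (a b c : ℕ) (ha : 0 < a) (hb : 0 < b) (hc : 0 < c)
    (h : c ^ 2 + a * b = a ^ 2 + b ^ 2) :
    TilesInto (IdealTrapezoid ((c : ℝ) ^ 2) ((a : ℝ) * b))
      (a ^ 2 + b ^ 2 + c ^ 2) a b c := by
  have hR : (c : ℝ) ^ 2 + a * b = a ^ 2 + b ^ 2 := by exact_mod_cast h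
  have left := (isTriangle_leftTriangle a.cast_nonneg b.cast_nonneg c.cast_nonneg hR).tilesInto_sq
    ha.ne'
  have middle := (isTriangle_middleTriangle a.cast_nonneg b.cast_nonneg c.cast_nonneg
    hR).tilesInto_sq hc.ne'
  have right := (isTriangle_rightTriangle a.cast_nonneg b.cast_nonneg c.cast_nonneg
    hR).tilesInto_sq hb.ne'
  rw [idealTrapezoid_eq_union hR, add_assoc, add_comm (b ^ 2)]
  exact left.union
    (middle.union right (disjoint_interior_middleTriangle_rightTriangle (Nat.cast_pos.2 ha) hR))
    (disjoint_interior_leftTriangle (Nat.cast_pos.2 hb) hR)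
end
end

section
/- Let a, b, c be pairwise coprime positive integers with c² = a² + b² + ab, and let m ≥ 1 be an integer. Then the triangle with side lengths ((a+2b)·m·a·b, (b+2a)·m·b², m·b·c²) tiles into (a+2b)·(b+2a)·m²·b² congruent copies of the triangle with side lengths (a, b, c). -/
noncomputable section

/-!
Take coordinates along two axes at an angle of 60°, so that `x² + xy + y²` is the squared norm. A
vector with coordinates `(a, b)` has length `c`; hence a parallelogram spanned by `m (a, 0)` and
`n (0, b)`, cut by a diagonal of each of its `a × b` cells, consists of `2mn` tiles. The large
triangle is placed with its incenter at the origin and its sides meeting at 60° along the axes.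
The bisectors from its other two vertices cut off, together with the third side, a triangle similar
to the tile. What remains on either side is cut parallel to its side of the large triangle into rows
of height `ab`, and these split into scaled tiles and parallelograms.

It suffices to cover the large triangle by the right number of tiles: the areas then add up
exactly, which forces the interiors of the tiles to be disjoint.
-/

section Congruence

variable {ι V : Type*} [NormedAddCommGroup V] [InnerProductSpace ℝ V] [FiniteDimensional ℝ V]

theorem exists_linearIsometryEquiv_of_inner_eq {x y : ι → V}
    (h : ∀ i j, inner ℝ (x i) (x j) = inner ℝ (y i) (y j)) :
    ∃ g : V ≃ₗᵢ[ℝ] V, ∀ i, g (x i) = y i := by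
  let X := Finsupp.linearCombination ℝ x
  let Y := Finsupp.linearCombination ℝ y
  have norm_eq (f : ι →₀ ℝ) : ‖X f‖ = ‖Y f‖ := by
    rw [← sq_eq_sq₀ (norm_nonneg _) (norm_nonneg _), ← real_inner_self_eq_norm_sq,
      ← real_inner_self_eq_norm_sq]
    simp only [X, Y, Finsupp.linearCombination_apply, Finsupp.sum_inner, Finsupp.inner_sum,
      real_inner_smul_left, real_inner_smul_right, h]
  have ker_le : LinearMap.ker X ≤ LinearMap.ker Y := fun f hf ↦ by
    rw [LinearMap.mem_ker, ← norm_eq_zero] at hf ⊢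
    rw [← norm_eq, hf]
  let T : LinearMap.range X →ₗ[ℝ] V :=
    (LinearMap.ker X).liftQ Y ker_le ∘ₗ X.quotKerEquivRange.symm
  have T_apply (f : ι →₀ ℝ) : T ⟨X f, f, rfl⟩ = Y f := by
    have : X.quotKerEquivRange (Submodule.Quotient.mk f) = ⟨X f, f, rfl⟩ := rfl
    simp [T, ← this]
  let L : LinearMap.range X →ₗᵢ[ℝ] V :=
    { T with norm_map' := by rintro ⟨_, f, rfl⟩; exact (T_apply f ▸ norm_eq f).symm }
  refine ⟨L.extend.toLinearIsometryEquiv rfl, fun i ↦ ?_⟩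
  have hx : X (Finsupp.single i 1) = x i := by simp [X]
  have hy : Y (Finsupp.single i 1) = y i := by simp [Y]
  rw [LinearIsometry.coe_toLinearIsometryEquiv, ← hx, ← hy, ← T_apply]
  exact L.extend_apply ⟨X _, _, rfl⟩

open scoped Congruent in
theorem exists_isometryEquiv_of_congruent {x y : ι → V} (h : x ≅ y) :
    ∃ f : V ≃ᵢ V, ∀ i, f (x i) = y i := by
  rcases isEmpty_or_nonempty ι with _ | ⟨⟨o⟩⟩
  · exact ⟨IsometryEquiv.refl V, isEmptyElim⟩
  have norm_eq (i j : ι) : ‖x i - x j‖ = ‖y i - y j‖ := by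
    simpa only [dist_eq_norm] using h.dist_eq i j
  obtain ⟨g, hg⟩ := exists_linearIsometryEquiv_of_inner_eq
    (x := fun i ↦ x i - x o) (y := fun i ↦ y i - y o) fun i j ↦ by
      simp only [real_inner_eq_norm_mul_self_add_norm_mul_self_sub_norm_sub_mul_self_div_two,
        sub_sub_sub_cancel_right, norm_eq]
  refine ⟨g.toIsometryEquiv.trans (IsometryEquiv.addRight (y o - g (x o))), fun i ↦ ?_⟩
  have hgi : g (x i) - g (x o) = y i - y o := by rw [← map_sub, hg i]
  calc g (x i) + (y o - g (x o)) = (g (x i) - g (x o)) + y o := by abel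
    _ = y i := by rw [hgi, sub_add_cancel]

end Congruence

section Disjointness

open MeasureTheory

variable {X ι : Type*} [TopologicalSpace X] [MeasurableSpace X] [OpensMeasurableSpace X]
  {μ : Measure X} [μ.IsOpenPosMeasure] [Fintype ι] {K : ι → Set X}

theorem interior_inter_interior_eq_empty_of_sum_measure_le (hK : ∀ i, μ (K i) ≠ ⊤)
    (hsum : ∑ i, μ (K i) ≤ μ (⋃ i, K i)) {i j : ι} (hij : i ≠ j) :
    interior (K i) ∩ interior (K j) = ∅ := by
  classical
  set U := interior (K i) ∩ interior (K j)
  have hU : IsOpen U := isOpen_interior.inter isOpen_interior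
  have hUi : U ⊆ K i := Set.inter_subset_left.trans interior_subset
  have hUj : U ⊆ K j := Set.inter_subset_right.trans interior_subset
  let L : ι → Set X := Function.update K j (K j \ U)
  have hcover : ⋃ l, K l ⊆ ⋃ l, L l := by
    refine Set.iUnion_subset fun l x hx ↦ ?_
    by_cases hxU : x ∈ U
    · exact Set.mem_iUnion.2 ⟨i, by simpa [L, hij] using hUi hxU⟩
    · refine Set.mem_iUnion.2 ⟨l, ?_⟩
      rcases eq_or_ne l j with rfl | hl
      · simpa [L] using ⟨hx, hxU⟩
      · simpa [L, hl] using hx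
  have hsplit : μ (K j) = μ (L j) + μ U := by
    rw [← measure_sdiff_add_inter (K j) hU.measurableSet, Set.inter_eq_right.2 hUj]
    simp [L]
  have hKL : ∑ l, μ (K l) = ∑ l, μ (L l) + μ U := by
    rw [← Finset.add_sum_erase _ _ (Finset.mem_univ j),
      ← Finset.add_sum_erase (a := j) _ (fun l ↦ μ (L l)) (Finset.mem_univ j), hsplit,
      Finset.sum_congr rfl fun l hl ↦ by rw [← show L l = K l from
        Function.update_of_ne (Finset.ne_of_mem_erase hl) _ _]]
    ring
  have hfin : ∑ l, μ (L l) ≠ ⊤ :=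
    ne_top_of_le_ne_top (ENNReal.sum_ne_top.2 fun l _ ↦ hK l) (hKL ▸ le_self_add)
  have hzero : ∑ l, μ (L l) + μ U ≤ ∑ l, μ (L l) + 0 := by
    rw [← hKL, add_zero]
    exact hsum.trans ((measure_mono hcover).trans (measure_iUnion_fintype_le μ L))
  rw [← hU.measure_eq_zero_iff (μ := μ), ← nonpos_iff_eq_zero]
  exact (ENNReal.add_le_add_iff_left hfin).1 hzero

end Disjointness

section Triangle

open MeasureTheory

theorem image_convexHull_of_isometryEquiv {E F : Type*} [NormedAddCommGroup E] [NormedSpace ℝ E]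
    [NormedAddCommGroup F] [NormedSpace ℝ F] (f : E ≃ᵢ F) (s : Set E) :
    f '' convexHull ℝ s = convexHull ℝ (f '' s) := by
  simpa using f.toRealAffineIsometryEquiv.toAffineMap.image_convexHull s

theorem volume_image_isometryEquiv {V W : Type*} [NormedAddCommGroup V] [InnerProductSpace ℝ V]
    [FiniteDimensional ℝ V] [MeasurableSpace V] [BorelSpace V] [NormedAddCommGroup W]
    [InnerProductSpace ℝ W] [FiniteDimensional ℝ W] [MeasurableSpace W] [BorelSpace W]
    (f : V ≃ᵢ W) (s : Set V) : volume (f '' s) = volume s := by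
  have hdim : Module.finrank ℝ W = Module.finrank ℝ V :=
    f.toRealAffineIsometryEquiv.linearIsometryEquiv.toLinearEquiv.finrank_eq.symm
  rw [← InnerProductSpace.euclideanHausdorffMeasure_eq_volume,
    ← InnerProductSpace.euclideanHausdorffMeasure_eq_volume, hdim,
    f.isometry.euclideanHausdorffMeasure_image]

namespace IsTriangle

variable {p q r : ℝ} {Δ Δ' : Set Plane}

theorem swap (h : IsTriangle p q r Δ) : IsTriangle q p r Δ := by
  obtain ⟨P, Q, R, rfl, rfl, rfl, rfl⟩ := h
  exact ⟨Q, P, R, rfl, rfl, dist_comm Q P, by rw [Set.insert_comm]⟩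

theorem image (h : IsTriangle p q r Δ) (f : Plane ≃ᵢ Plane) : IsTriangle p q r (f '' Δ) := by
  obtain ⟨P, Q, R, rfl, rfl, rfl, rfl⟩ := h
  refine ⟨f P, f Q, f R, f.dist_eq .., f.dist_eq .., f.dist_eq .., ?_⟩
  simp only [image_convexHull_of_isometryEquiv, Set.image_insert_eq, Set.image_singleton]

theorem exists_image_eq (h : IsTriangle p q r Δ) (h' : IsTriangle p q r Δ') :
    ∃ f : Plane ≃ᵢ Plane, f '' Δ = Δ' := by
  obtain ⟨P, Q, R, rfl, rfl, rfl, rfl⟩ := h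
  obtain ⟨P', Q', R', hp, hq, hr, rfl⟩ := h'
  obtain ⟨f, hf⟩ := exists_isometryEquiv_of_congruent
    (EuclideanGeometry.side_side_side hr.symm hp.symm (by simpa only [dist_comm] using hq.symm))
  have hP : f P = P' := hf 0
  have hQ : f Q = Q' := hf 1
  have hR : f R = R' := hf 2
  refine ⟨f, ?_⟩
  simp only [image_convexHull_of_isometryEquiv, Set.image_insert_eq, Set.image_singleton,
    hP, hQ, hR]

theorem volume_eq (h : IsTriangle p q r Δ) (h' : IsTriangle p q r Δ') :
    volume Δ = volume Δ' := by
  obtain ⟨f, rfl⟩ := h.exists_image_eq h'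
  exact (volume_image_isometryEquiv f Δ).symm

theorem volume_ne_top (h : IsTriangle p q r Δ) : volume Δ ≠ ⊤ := by
  obtain ⟨P, Q, R, -, -, -, rfl⟩ := h
  exact ((Set.toFinite {P, Q, R}).isCompact_convexHull ℝ).measure_ne_top

end IsTriangle

end Triangle

/-- `S` is the union of `n` (possibly overlapping) triangles with side lengths `(p, q, r)`: a
tiling of `S` without the condition on interiors, which is recovered from an area count. -/
def IsUnionOfTriangles (p q r : ℝ) (n : ℕ) (S : Set Plane) : Prop :=
  ∃ T : Fin n → Set Plane, (∀ i, IsTriangle p q r (T i)) ∧ S = ⋃ i, T i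

theorem IsTriangle.isUnionOfTriangles {p q r : ℝ} {Δ : Set Plane} (h : IsTriangle p q r Δ) :
    IsUnionOfTriangles p q r 1 Δ :=
  ⟨fun _ ↦ Δ, fun _ ↦ h, (Set.iUnion_const Δ).symm⟩

namespace IsUnionOfTriangles

open MeasureTheory

variable {p q r : ℝ} {m n : ℕ} {S T : Set Plane}

theorem union (hS : IsUnionOfTriangles p q r m S) (hT : IsUnionOfTriangles p q r n T) :
    IsUnionOfTriangles p q r (m + n) (S ∪ T) := by
  obtain ⟨A, hA, rfl⟩ := hS
  obtain ⟨B, hB, rfl⟩ := hT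
  refine ⟨Fin.append A B, Fin.addCases (by simpa using hA) (by simpa using hB), ?_⟩
  rw [← finSumFinEquiv.surjective.iUnion_comp, Set.iUnion_sum]
  simp

theorem swap (h : IsUnionOfTriangles p q r n S) : IsUnionOfTriangles q p r n S := by
  obtain ⟨A, hA, rfl⟩ := h
  exact ⟨A, fun i ↦ (hA i).swap, rfl⟩

theorem image (h : IsUnionOfTriangles p q r n S) (f : Plane ≃ᵢ Plane) :
    IsUnionOfTriangles p q r n (f '' S) := by
  obtain ⟨A, hA, rfl⟩ := h
  exact ⟨fun i ↦ f '' A i, fun i ↦ (hA i).image f, Set.image_iUnion⟩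

theorem tilesInto (h : IsUnionOfTriangles p q r n S) (hT : IsTriangle p q r T)
    (hvol : n * volume T ≤ volume S) : TilesInto S n p q r := by
  obtain ⟨A, hA, rfl⟩ := h
  choose f hf using fun i ↦ hT.exists_image_eq (hA i)
  refine ⟨f, T, hT, Set.iUnion_congr fun i ↦ (hf i).symm, fun i j hij ↦ ?_⟩
  simp only [hf]
  refine interior_inter_interior_eq_empty_of_sum_measure_le (μ := volume)
    (fun i ↦ (hA i).volume_ne_top) ?_ hij
  simpa [(hA _).volume_eq hT] using hvol

end IsUnionOfTriangles

section ConvexHull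

theorem mem_convexHull_triple {E : Type*} [AddCommGroup E] [Module ℝ E] {P Q R x : E} :
    x ∈ convexHull ℝ {P, Q, R} ↔
      ∃ s t : ℝ, 0 ≤ s ∧ 0 ≤ t ∧ s + t ≤ 1 ∧ P + s • (Q - P) + t • (R - P) = x := by
  constructor
  · rw [convexHull_insert (Set.insert_nonempty ..), convexHull_pair, mem_convexJoin]
    rintro ⟨_, rfl, y, hy, hx⟩
    rw [segment_eq_image'] at hy hx
    obtain ⟨θ, ⟨hθ₀, hθ₁⟩, rfl⟩ := hy
    obtain ⟨η, ⟨hη₀, hη₁⟩, rfl⟩ := hx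
    refine ⟨η * (1 - θ), η * θ, mul_nonneg hη₀ (sub_nonneg.2 hθ₁), mul_nonneg hη₀ hθ₀, ?_, ?_⟩
    · linarith
    · module
  · rintro ⟨s, t, hs, ht, hst, rfl⟩
    refine mem_convexHull_of_exists_fintype ![1 - s - t, s, t] ![P, Q, R] ?_ ?_ ?_ ?_
    · simpa [Fin.forall_fin_succ, hs, ht] using by linarith
    · simp only [Fin.sum_univ_three, Matrix.cons_val]
      ring
    · simp [Fin.forall_fin_succ]
    · simp only [Fin.sum_univ_three, Matrix.cons_val]
      module

/-- The cross product of two plane vectors, i.e. the determinant of the matrix with these columns: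
it is nonnegative when the second vector lies to the left of the first. -/
def wedge (x y : ℝ × ℝ) : ℝ := x.1 * y.2 - x.2 * y.1

theorem mem_convexHull_triple_iff_wedge {P Q R : ℝ × ℝ} (h : 0 < wedge (Q - P) (R - P))
    {x : ℝ × ℝ} :
    x ∈ convexHull ℝ {P, Q, R} ↔
      0 ≤ wedge (Q - P) (x - P) ∧ 0 ≤ wedge (R - Q) (x - Q) ∧ 0 ≤ wedge (P - R) (x - R) := by
  set D := wedge (Q - P) (R - P) with hD
  rw [mem_convexHull_triple]
  constructor
  · rintro ⟨s, t, hs, ht, hst, rfl⟩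
    refine ⟨(mul_nonneg ht h.le).trans_eq ?_,
      (mul_nonneg (sub_nonneg.2 hst) h.le).trans_eq ?_, (mul_nonneg hs h.le).trans_eq ?_⟩ <;>
    · simp only [hD, wedge, Prod.fst_sub, Prod.snd_sub, Prod.fst_add, Prod.snd_add, Prod.smul_fst,
        Prod.smul_snd, smul_eq_mul]
      ring
  · rintro ⟨hP, hQ, hR⟩
    refine ⟨wedge (P - R) (x - R) / D, wedge (Q - P) (x - P) / D, by positivity, by positivity,
      ?_, ?_⟩
    · rw [← add_div, div_le_one h, ← sub_nonneg]
      refine hQ.trans_eq ?_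
      simp only [hD, wedge, Prod.fst_sub, Prod.snd_sub]
      ring
    · ext
      all_goals
        simp only [Prod.fst_sub, Prod.snd_sub, Prod.fst_add, Prod.snd_add, Prod.smul_fst,
          Prod.smul_snd, smul_eq_mul]
        field_simp
        simp only [hD, wedge, Prod.fst_sub, Prod.snd_sub]
        ring

end ConvexHull

section Grid

/-- The triangle with vertices `(s, t)`, `(s + n, t)` and `(s, t + n)`; for negative `n` it is the
point reflection of the one for `-n` in `(s, t)`. -/
def corner (s t n : ℝ) : Set (ℝ × ℝ) := convexHull ℝ {(s, t), (s + n, t), (s, t + n)}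

theorem mem_corner {s t n : ℝ} (hn : n ≠ 0) {x : ℝ × ℝ} :
    x ∈ corner s t n ↔
      0 ≤ n * (x.2 - t) ∧ n * (x.1 - s + (x.2 - t)) ≤ n * n ∧ 0 ≤ n * (x.1 - s) := by
  have hwedge : wedge ((s + n, t) - (s, t)) ((s, t + n) - (s, t)) = n * n := by simp [wedge]
  rw [corner, mem_convexHull_triple_iff_wedge (hwedge ▸ mul_self_pos.2 hn)]
  simp only [wedge, Prod.fst_sub, Prod.snd_sub]
  refine and_congr ?_ (and_congr ?_ ?_)
  · ring_nf
  · rw [← sub_nonneg (b := n * _)]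
    ring_nf
  · ring_nf

theorem mem_corner_of_pos {s t n : ℝ} (hn : 0 < n) {x : ℝ × ℝ} :
    x ∈ corner s t n ↔ t ≤ x.2 ∧ x.1 - s + (x.2 - t) ≤ n ∧ s ≤ x.1 := by
  rw [mem_corner hn.ne', mul_nonneg_iff_of_pos_left hn, mul_le_mul_iff_right₀ hn,
    mul_nonneg_iff_of_pos_left hn, sub_nonneg, sub_nonneg]

theorem Icc_prod_Icc_eq_corner_union_corner (s t : ℝ) :
    Set.Icc s (s + 1) ×ˢ Set.Icc t (t + 1) = corner s t 1 ∪ corner (s + 1) (t + 1) (-1) := by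
  ext x
  rw [Set.mem_union, mem_corner (by norm_num), mem_corner (by norm_num), Set.mem_prod]
  grind

theorem corner_add_one {n : ℝ} (hn : 0 < n) (s t : ℝ) :
    corner s t (n + 1) =
      corner s (t + 1) n ∪ Set.Icc s (s + n) ×ˢ Set.Icc t (t + 1) ∪ corner (s + n) t 1 := by
  ext x
  rw [Set.mem_union, Set.mem_union, mem_corner_of_pos (by positivity), mem_corner_of_pos hn,
    mem_corner_of_pos one_pos, Set.mem_prod]
  grind

/-- The affine coordinate system `(s, t) ↦ s • u + t • v + z` with axes along `u` and `v` and
origin `z`. -/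
def frame {E : Type*} [AddCommGroup E] [Module ℝ E] (z u v : E) : ℝ × ℝ →ᵃ[ℝ] E :=
  ((LinearMap.toSpanSingleton ℝ E u).coprod (LinearMap.toSpanSingleton ℝ E v)).toAffineMap +
    AffineMap.const ℝ (ℝ × ℝ) z

theorem frame_apply {E : Type*} [AddCommGroup E] [Module ℝ E] (z u v : E) (x : ℝ × ℝ) :
    frame z u v x = x.1 • u + x.2 • v + z := by
  simp [frame]

namespace IsUnionOfTriangles

theorem of_forall_unit {p q r : ℝ} {F : Set ℝ → Set Plane}
    (hF : ∀ A B, F (A ∪ B) = F A ∪ F B) {k : ℕ}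
    (h : ∀ s, IsUnionOfTriangles p q r k (F (Set.Icc s (s + 1)))) {m : ℕ} (hm : 1 ≤ m) (s : ℝ) :
    IsUnionOfTriangles p q r (m * k) (F (Set.Icc s (s + m))) := by
  induction m, hm using Nat.le_induction with
  | base => simpa using h s
  | succ m hm ih =>
    rw [Nat.cast_succ, ← add_assoc, ← Set.Icc_union_Icc_eq_Icc (b := s + m) (by simp) (by simp),
      hF, add_one_mul]
    exact ih.union (h _)

variable {p q r : ℝ} {u v : Plane} (hu : ‖u‖ = p) (hv : ‖v‖ = q) (huv : ‖u - v‖ = r) (z : Plane)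

include hu hv huv

theorem frame_image_corner_of_abs_eq_one (s t : ℝ) {ε : ℝ} (hε : |ε| = 1) :
    IsUnionOfTriangles p q r 1 (frame z u v '' corner s t ε) := by
  refine IsTriangle.isUnionOfTriangles
    ⟨frame z u v (s, t + ε), frame z u v (s + ε, t), frame z u v (s, t), ?_, ?_, ?_, ?_⟩
  · rw [dist_eq_norm, ← hu, ← one_mul ‖u‖, ← hε, ← Real.norm_eq_abs, ← norm_smul]
    simp only [frame_apply]
    congr 1
    module
  · rw [dist_eq_norm, ← hv, ← one_mul ‖v‖, ← hε, ← Real.norm_eq_abs, ← norm_smul]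
    simp only [frame_apply]
    congr 1
    module
  · rw [dist_comm, dist_eq_norm, ← huv, ← one_mul ‖u - v‖, ← hε, ← Real.norm_eq_abs, ← norm_smul]
    simp only [frame_apply]
    congr 1
    module
  · rw [corner, AffineMap.image_convexHull, Set.insert_comm, Set.pair_comm, Set.insert_comm]
    simp only [Set.image_insert_eq, Set.image_singleton]

theorem frame_image_Icc_prod_Icc {m n : ℕ} (hm : 1 ≤ m) (hn : 1 ≤ n) (s t : ℝ) :
    IsUnionOfTriangles p q r (n * (m * 2))
      (frame z u v '' Set.Icc s (s + m) ×ˢ Set.Icc t (t + n)) := by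
  refine of_forall_unit (F := fun B ↦ frame z u v '' Set.Icc s (s + m) ×ˢ B)
    (fun B B' ↦ by rw [Set.prod_union, Set.image_union]) (fun t ↦ ?_) hn t
  refine of_forall_unit (F := fun A ↦ frame z u v '' A ×ˢ Set.Icc t (t + 1))
    (fun A A' ↦ by rw [Set.union_prod, Set.image_union]) (fun s ↦ ?_) hm s
  simp only [Icc_prod_Icc_eq_corner_union_corner, Set.image_union]
  exact (frame_image_corner_of_abs_eq_one hu hv huv z s t abs_one).union
    (frame_image_corner_of_abs_eq_one hu hv huv z _ _ (by simp))

theorem frame_image_corner {n : ℕ} (hn : 1 ≤ n) (s t : ℝ) :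
    IsUnionOfTriangles p q r (n ^ 2) (frame z u v '' corner s t n) := by
  have tile (s t : ℝ) := frame_image_corner_of_abs_eq_one hu hv huv z s t abs_one
  induction n, hn using Nat.le_induction generalizing t with
  | base => simpa using tile s t
  | succ n hn ih =>
    have strip : IsUnionOfTriangles p q r (1 * (n * 2))
        (frame z u v '' Set.Icc s (s + n) ×ˢ Set.Icc t (t + 1)) := by
      simpa using frame_image_Icc_prod_Icc hu hv huv z hn le_rfl s t
    rw [Nat.cast_succ, corner_add_one (by exact_mod_cast hn), Set.image_union, Set.image_union,
      show (n + 1) ^ 2 = n ^ 2 + 1 * (n * 2) + 1 by ring]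
    exact ((ih (t + 1)).union strip).union (tile _ _)

end IsUnionOfTriangles

theorem IsTriangle.isUnionOfTriangles_sq {p q r : ℝ} {n : ℕ} (hn : 1 ≤ n) {Δ : Set Plane}
    (h : IsTriangle (n * p) (n * q) (n * r) Δ) : IsUnionOfTriangles p q r (n ^ 2) Δ := by
  obtain ⟨P, Q, R, hQR, hPR, hPQ, rfl⟩ := h
  have hn₀ : (0 : ℝ) < n := by exact_mod_cast hn
  have norm_eq {x : Plane} {l : ℝ} (hx : ‖x‖ = n * l) : ‖(n : ℝ)⁻¹ • x‖ = l := by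
    rw [norm_smul, norm_inv, Real.norm_natCast, hx, inv_mul_cancel_left₀ hn₀.ne']
  have huv : ‖(n : ℝ)⁻¹ • (Q - R) - (n : ℝ)⁻¹ • (P - R)‖ = r := by
    rw [← smul_sub, sub_sub_sub_cancel_right]
    exact norm_eq (by rwa [← dist_eq_norm, dist_comm])
  have cover := IsUnionOfTriangles.frame_image_corner (norm_eq (by rwa [← dist_eq_norm]))
    (norm_eq (by rwa [← dist_eq_norm])) huv R hn 0 0
  have image_eq : frame R ((n : ℝ)⁻¹ • (Q - R)) ((n : ℝ)⁻¹ • (P - R)) '' corner 0 0 n =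
      convexHull ℝ {R, Q, P} := by
    rw [corner, AffineMap.image_convexHull]
    simp [Set.image_insert_eq, frame_apply, smul_smul, hn₀.ne']
  rwa [image_eq, Set.insert_comm, Set.pair_comm, Set.insert_comm] at cover

end Grid

section Eisenstein

open MeasureTheory

/-- The norm form `x² + xy + y²` of the Eisenstein lattice. -/
def eisensteinNorm (x : ℝ × ℝ) : ℝ := x.1 ^ 2 + x.1 * x.2 + x.2 ^ 2

/-- The oblique coordinates of the plane whose axes have unit length and meet at an angle of 60°. -/
def eisenstein : (ℝ × ℝ) ≃L[ℝ] Plane :=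
  LinearEquiv.toContinuousLinearEquiv
    { toFun := fun x ↦ pt (x.1 + x.2 / 2) (√3 / 2 * x.2)
      map_add' := fun x y ↦ by ext i; fin_cases i <;> simp [pt] <;> ring
      map_smul' := fun s x ↦ by ext i; fin_cases i <;> simp [pt] <;> ring
      invFun := fun z ↦ (z 0 - z 1 / √3, 2 / √3 * z 1)
      left_inv := fun x ↦ by ext <;> simp [pt] <;> field_simp; ring
      right_inv := fun z ↦ by ext i; fin_cases i <;> simp [pt] <;> field_simp; ring }

theorem norm_eisenstein_sq (x : ℝ × ℝ) : ‖eisenstein x‖ ^ 2 = eisensteinNorm x := by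
  have h3 : √3 ^ 2 = (3 : ℝ) := Real.sq_sqrt (by norm_num)
  simp only [EuclideanSpace.norm_sq_eq, Real.norm_eq_abs, sq_abs, Fin.sum_univ_two, eisensteinNorm]
  change (x.1 + x.2 / 2) ^ 2 + (√3 / 2 * x.2) ^ 2 = _
  linear_combination x.2 ^ 2 / 4 * h3

theorem norm_eisenstein_eq_iff {x : ℝ × ℝ} {l : ℝ} (hl : 0 ≤ l) :
    ‖eisenstein x‖ = l ↔ eisensteinNorm x = l ^ 2 := by
  rw [← sq_eq_sq₀ (norm_nonneg _) hl, norm_eisenstein_sq]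

theorem eisensteinNorm_swap (x : ℝ × ℝ) : eisensteinNorm x.swap = eisensteinNorm x := by
  simp only [eisensteinNorm, Prod.fst_swap, Prod.snd_swap]
  ring

theorem isTriangle_eisenstein_image {p q r : ℝ} (hp : 0 ≤ p) (hq : 0 ≤ q) (hr : 0 ≤ r)
    {P Q R : ℝ × ℝ} (hQR : eisensteinNorm (Q - R) = p ^ 2) (hPR : eisensteinNorm (P - R) = q ^ 2)
    (hPQ : eisensteinNorm (P - Q) = r ^ 2) :
    IsTriangle p q r (eisenstein '' convexHull ℝ {P, Q, R}) := by
  refine ⟨eisenstein P, eisenstein Q, eisenstein R, ?_, ?_, ?_, ?_⟩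
  · rwa [dist_eq_norm, ← map_sub, norm_eisenstein_eq_iff hp]
  · rwa [dist_eq_norm, ← map_sub, norm_eisenstein_eq_iff hq]
  · rwa [dist_eq_norm, ← map_sub, norm_eisenstein_eq_iff hr]
  · rw [← ContinuousLinearEquiv.coe_coe, ← ContinuousLinearMap.coe_coe,
      LinearMap.image_convexHull]
    simp only [Set.image_insert_eq, Set.image_singleton]

open scoped Pointwise in
theorem measure_convexHull_triple (μ : Measure (ℝ × ℝ)) [μ.IsAddHaarMeasure] (P Q R : ℝ × ℝ) :
    μ (convexHull ℝ {P, Q, R}) =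
      ENNReal.ofReal |wedge (Q - P) (R - P)| * μ (convexHull ℝ {(0, 0), (1, 0), (0, 1)}) := by
  let M : Matrix (Fin 2) (Fin 2) ℝ := !![(Q - P).1, (R - P).1; (Q - P).2, (R - P).2]
  let T := Matrix.toLin (Module.Basis.finTwoProd ℝ) (Module.Basis.finTwoProd ℝ) M
  have det_T : LinearMap.det T = wedge (Q - P) (R - P) := by
    rw [LinearMap.det_toLin, Matrix.det_fin_two_of, wedge]
    ring
  have T_apply (x : ℝ × ℝ) : T x = x.1 • (Q - P) + x.2 • (R - P) := by
    ext <;> simp [T, M, Matrix.toLin_finTwoProd, mul_comm]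
  have image_eq : P +ᵥ T '' convexHull ℝ {(0, 0), (1, 0), (0, 1)} = convexHull ℝ {P, Q, R} := by
    rw [LinearMap.image_convexHull, ← convexHull_vadd]
    congr 1
    simp [T_apply, Set.image_insert_eq, ← Set.image_vadd]
  rw [← image_eq, measure_vadd, Measure.addHaar_image_linearMap, det_T]

theorem volume_eisenstein_image_convexHull_triple (P Q R : ℝ × ℝ) :
    volume (eisenstein '' convexHull ℝ {P, Q, R}) =
      ENNReal.ofReal |wedge (Q - P) (R - P)| *
        volume (eisenstein '' convexHull ℝ {(0, 0), (1, 0), (0, 1)}) := by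
  have map_apply (S : Set (ℝ × ℝ)) :
      volume.map eisenstein.symm S = volume (eisenstein '' S) := by
    rw [eisenstein.image_eq_preimage_symm]
    exact eisenstein.symm.toHomeomorph.toMeasurableEquiv.map_apply S
  have := eisenstein.symm.isAddHaarMeasure_map (volume : Measure Plane)
  rw [← map_apply, ← map_apply, measure_convexHull_triple]

namespace IsUnionOfTriangles

variable {p q r : ℝ} {S T U : Set (ℝ × ℝ)}

theorem eisenstein_image_of_eq_union {m n : ℕ}
    (hS : IsUnionOfTriangles p q r m (eisenstein '' S))
    (hT : IsUnionOfTriangles p q r n (eisenstein '' T)) (hU : U = S ∪ T) :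
    IsUnionOfTriangles p q r (m + n) (eisenstein '' U) := by
  rw [hU, Set.image_union]
  exact hS.union hT

theorem eisenstein_image_preimage_swap {n : ℕ}
    (hS : IsUnionOfTriangles p q r n (eisenstein '' S)) :
    IsUnionOfTriangles p q r n (eisenstein '' (Prod.swap ⁻¹' S)) := by
  let f : Plane ≃ₗᵢ[ℝ] Plane :=
    { toLinearEquiv := (eisenstein.symm.toLinearEquiv.trans (LinearEquiv.prodComm ℝ ℝ ℝ)).trans
        eisenstein.toLinearEquiv
      norm_map' := fun z ↦ by
        obtain ⟨x, rfl⟩ := eisenstein.surjective z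
        rw [← sq_eq_sq₀ (norm_nonneg _) (norm_nonneg _), norm_eisenstein_sq, ← eisensteinNorm_swap,
          ← norm_eisenstein_sq]
        simp }
  have hf (x : ℝ × ℝ) : f (eisenstein x) = eisenstein x.swap := by simp [f]
  convert hS.image f.toIsometryEquiv using 1
  rw [← Set.image_swap_eq_preimage_swap, Set.image_image, Set.image_image]
  exact Set.image_congr fun x _ ↦ (hf x).symm

theorem eisenstein_image_Icc_prod_Icc (hp : 0 < p) (hq : 0 < q) (hr : 0 ≤ r)
    (hpqr : r ^ 2 = p ^ 2 + q ^ 2 + p * q) {m n : ℕ} (hm : 1 ≤ m) (hn : 1 ≤ n) (x y : ℝ) :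
    IsUnionOfTriangles p q r (n * (m * 2))
      (eisenstein '' Set.Icc x (x + m * p) ×ˢ Set.Icc y (y + n * q)) := by
  have hu : ‖eisenstein (p, 0)‖ = p := (norm_eisenstein_eq_iff hp.le).2 (by simp [eisensteinNorm])
  have hv : ‖eisenstein (0, -q)‖ = q := (norm_eisenstein_eq_iff hq.le).2 (by simp [eisensteinNorm])
  have huv : ‖eisenstein (p, 0) - eisenstein (0, -q)‖ = r := by
    rw [← map_sub, norm_eisenstein_eq_iff hr, hpqr]
    simp [eisensteinNorm]
    ring
  let f : ℝ × ℝ → ℝ × ℝ := Prod.map (p * · + x) ((q * · + y) ∘ (n - ·))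
  have frame_eq (s : ℝ × ℝ) :
      frame (eisenstein (x, y + n * q)) (eisenstein (p, 0)) (eisenstein (0, -q)) s =
        eisenstein (f s) := by
    rw [frame_apply, ← map_smul, ← map_smul, ← map_add, ← map_add]
    congr 1
    ext <;> simp [f] <;> ring
  have image_f : f '' Set.Icc 0 (m : ℝ) ×ˢ Set.Icc 0 (n : ℝ) =
      Set.Icc x (x + m * p) ×ˢ Set.Icc y (y + n * q) := by
    rw [Set.prodMap_image_prod, Set.image_comp, Set.image_const_sub_Icc, Set.image_affine_Icc' hp,
      Set.image_affine_Icc' hq]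
    ring_nf
  have cover := frame_image_Icc_prod_Icc hu hv huv (eisenstein (x, y + n * q)) hm hn 0 0
  simp only [zero_add, frame_eq] at cover
  rwa [← Set.image_image, image_f] at cover

end IsUnionOfTriangles

end Eisenstein

section Regions

theorem pos_of_sq_eq {a b c : ℕ} (ha : 0 < a) (h : c ^ 2 = a ^ 2 + b ^ 2 + a * b) : 0 < c :=
  (pow_pos_iff two_ne_zero).1 (h ▸ by positivity)

namespace IsUnionOfTriangles

theorem eisenstein_image_convexHull {p q r : ℝ} (hp : 0 ≤ p) (hq : 0 ≤ q) (hr : 0 ≤ r) {n : ℕ}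
    (hn : 1 ≤ n) {P Q R : ℝ × ℝ} (hQR : eisensteinNorm (Q - R) = (n * p) ^ 2)
    (hPR : eisensteinNorm (P - R) = (n * q) ^ 2) (hPQ : eisensteinNorm (P - Q) = (n * r) ^ 2) :
    IsUnionOfTriangles p q r (n ^ 2) (eisenstein '' convexHull ℝ {P, Q, R}) :=
  (isTriangle_eisenstein_image (by positivity) (by positivity) (by positivity)
    hQR hPR hPQ).isUnionOfTriangles_sq hn

theorem eisenstein_image_axisTriangle {p q r : ℝ} (hp : 0 < p) (hq : 0 < q) (hr : 0 ≤ r)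
    (hpqr : r ^ 2 = p ^ 2 + q ^ 2 + p * q) {n : ℕ} (hn : 1 ≤ n) (x y : ℝ) :
    IsUnionOfTriangles p q r (n ^ 2) (eisenstein ''
      {z | y ≤ z.2 ∧ z.1 ≤ x + n * p ∧ p * (z.2 - y) ≤ q * (z.1 - x)}) := by
  convert eisenstein_image_convexHull hp.le hq.le hr hn
    (P := (x + n * p, y + n * q)) (Q := (x, y)) (R := (x + n * p, y)) ?_ ?_ ?_ using 2
  · ext z
    have hwedge : 0 < n * n * (p * q) := by positivity
    rw [mem_convexHull_triple_iff_wedge (hwedge.trans_eq (by simp [wedge]; ring))]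
    simp only [wedge, Set.mem_ofPred_eq, Prod.fst_sub, Prod.snd_sub]
    have hnp : 0 < n * p := by positivity
    constructor <;> rintro ⟨h₁, h₂, h₃⟩ <;> refine ⟨?_, ?_, ?_⟩ <;> nlinarith
  all_goals simp [eisensteinNorm]; try linear_combination (-n ^ 2) * hpqr

variable {a b c : ℕ} (ha : 0 < a) (hb : 0 < b) (h : c ^ 2 = a ^ 2 + b ^ 2 + a * b)

include ha hb h

theorem eisenstein_image_strip {i j : ℕ} (hi : 1 ≤ i) (hj : 1 ≤ j) (x y : ℝ) :
    IsUnionOfTriangles a b c (2 * (i * a + j * b))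
      (eisenstein '' Set.Icc x (x + (i * a + j * b)) ×ˢ Set.Icc y (y + a * b)) := by
  have hR : (c : ℝ) ^ 2 = a ^ 2 + b ^ 2 + a * b := by exact_mod_cast h
  have left := eisenstein_image_Icc_prod_Icc (p := a) (q := b) (by positivity) (by positivity)
    (by positivity) hR hi ha x y
  have right := (eisenstein_image_Icc_prod_Icc (p := b) (q := a) (r := c) (by positivity)
    (by positivity) (by positivity) (by linarith) hj hb (x + i * a) y).swap
  convert left.eisenstein_image_of_eq_union right ?_ using 1
  · ring
  · rw [mul_comm (b : ℝ) a, ← Set.union_prod, Set.Icc_union_Icc_eq_Icc, add_assoc]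
    · simpa using by positivity
    · simpa using by positivity

theorem eisenstein_image_bisectorTriangle (x y : ℝ) :
    IsUnionOfTriangles a b c (c ^ 2) (eisenstein '' {z | b * (z.1 - x) ≤ a * (z.2 - y) ∧
      0 ≤ a * (z.1 - x) + (a + b) * (z.2 - y) ∧ z.2 ≤ y + a * b}) := by
  have hR : (c : ℝ) ^ 2 = a ^ 2 + b ^ 2 + a * b := by exact_mod_cast h
  have hc : 0 < c := pos_of_sq_eq ha h
  have ha' : (0 : ℝ) < a := by positivity
  have hb' : (0 : ℝ) < b := by positivity
  convert (eisenstein_image_convexHull (p := b) (q := a) (r := c) (by positivity) (by positivity)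
    (by positivity) (Nat.succ_le_of_lt hc) (P := (x + a ^ 2, y + a * b))
    (Q := (x - b * (a + b), y + a * b)) (R := (x, y)) ?_ ?_ ?_).swap using 2
  · ext z
    have hc2 : (0 : ℝ) < c ^ 2 := by positivity
    have hwedge : (0 : ℝ) < a * b * c ^ 2 := by positivity
    rw [mem_convexHull_triple_iff_wedge (hwedge.trans_eq (by simp [wedge, hR]; ring))]
    simp only [wedge, Set.mem_ofPred_eq, Prod.fst_sub, Prod.snd_sub]
    constructor <;> rintro ⟨h₁, h₂, h₃⟩ <;> refine ⟨?_, ?_, ?_⟩ <;> nlinarith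
  all_goals simp only [eisensteinNorm, Prod.mk_sub_mk, mul_pow, hR]; ring

theorem eisenstein_image_row {i j : ℕ} (hi : 1 ≤ i) (hj : 1 ≤ j) (x y : ℝ) :
    IsUnionOfTriangles a b c (c ^ 2 + a ^ 2 + 2 * (i * a + j * b)) (eisenstein ''
      {z | y ≤ z.2 ∧ z.2 ≤ y + a * b ∧ 0 ≤ a * (z.1 - x) + (a + b) * (z.2 - y) ∧
        z.1 ≤ x + a * a + (i * a + j * b)}) := by
  have hR : (c : ℝ) ^ 2 = a ^ 2 + b ^ 2 + a * b := by exact_mod_cast h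
  have ha' : (0 : ℝ) < a := by positivity
  have hb' : (0 : ℝ) < b := by positivity
  refine ((eisenstein_image_bisectorTriangle ha hb h x y).eisenstein_image_of_eq_union
    (eisenstein_image_axisTriangle ha' hb' (by positivity) hR ha x y)
    rfl).eisenstein_image_of_eq_union (eisenstein_image_strip ha hb h hi hj (x + a * a) y) ?_
  ext ⟨s, t⟩
  simp only [Set.mem_union, Set.mem_ofPred_eq, Set.mem_prod, Set.mem_Icc]
  constructor
  · rintro ⟨h₁, h₂, h₃, h₄⟩
    rcases le_total (b * (s - x)) (a * (t - y)) with h₅ | h₅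
    · exact .inl (.inl ⟨h₅, h₃, h₂⟩)
    rcases le_total s (x + a * a) with h₆ | h₆
    · exact .inl (.inr ⟨h₁, h₆, h₅⟩)
    · exact .inr ⟨⟨h₆, h₄⟩, h₁, h₂⟩
  · rintro ((⟨h₁, h₂, h₃⟩ | ⟨h₁, h₂, h₃⟩) | ⟨⟨h₁, h₂⟩, h₃, h₄⟩)
    · have hy : 0 ≤ (a ^ 2 + b ^ 2 + a * b) * (t - y) := by nlinarith
      have hy := sub_nonneg.1 (nonneg_of_mul_nonneg_right hy (by positivity))
      refine ⟨hy, h₃, h₂, ?_⟩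
      nlinarith
    · refine ⟨h₁, ?_, ?_, ?_⟩ <;> nlinarith
    · refine ⟨h₃, h₄, ?_, h₂⟩
      nlinarith

theorem eisenstein_image_level {m : ℕ} (hm : a < m + b) (j : ℕ) :
    IsUnionOfTriangles a b c (2 * m * a + (2 * j + 3) * (b * (a + b))) (eisenstein ''
      {z | (j + 1) * (a * b) ≤ z.2 ∧ z.2 ≤ (j + 2) * (a * b) ∧ 0 ≤ a * z.1 + (a + b) * z.2 ∧
        z.1 ≤ m * a}) := by
  obtain ⟨w, hw⟩ := Nat.exists_eq_add_of_lt hm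
  have hj : 1 ≤ (j + 1) * b := Nat.mul_pos j.succ_pos hb
  convert eisenstein_image_row ha hb h (i := w + 1 + j * b) (by omega) hj
    (-((j + 1) * (b * (a + b)))) ((j + 1) * (a * b)) using 1
  · zify at h hw ⊢
    linear_combination 2 * a * hw - h
  · have hwR : ((m + b) * a : ℝ) = (a + w + 1) * a := by exact_mod_cast congrArg (· * a) hw
    congr! 3
    push_cast
    constructor <;> rintro ⟨h₁, h₂, h₃, h₄⟩ <;> refine ⟨?_, ?_, ?_, ?_⟩ <;> linarith

theorem eisenstein_image_levels {m n : ℕ} (hm : a < m + b) (hn : 1 ≤ n) :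
    IsUnionOfTriangles a b c (n * (2 * m * a + (n + 2) * (b * (a + b)))) (eisenstein ''
      {z | a * b ≤ z.2 ∧ z.2 ≤ (n + 1) * (a * b) ∧ 0 ≤ a * z.1 + (a + b) * z.2 ∧
        z.1 ≤ m * a}) := by
  have hab : (0 : ℝ) < a * b := by positivity
  induction n, hn using Nat.le_induction with
  | base =>
    convert eisenstein_image_level ha hb h hm 0 using 1
    · ring
    · norm_num
  | succ n _ ih =>
    convert ih.eisenstein_image_of_eq_union (eisenstein_image_level ha hb h hm n) ?_ using 1
    · ring
    · ext z
      simp only [Set.mem_ofPred_eq, Set.mem_union]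
      push_cast
      constructor
      · rintro ⟨h₁, h₂, h₃, h₄⟩
        rcases le_total z.2 ((n + 1) * (a * b)) with h₅ | h₅
        · exact .inl ⟨h₁, h₅, h₃, h₄⟩
        · exact .inr ⟨h₅, by linarith, h₃, h₄⟩
      · rintro (⟨h₁, h₂, h₃, h₄⟩ | ⟨h₁, h₂, h₃, h₄⟩)
        · exact ⟨h₁, by linarith, h₃, h₄⟩
        · exact ⟨by nlinarith, by linarith, h₃, h₄⟩

end IsUnionOfTriangles

end Regions

section Assembly

theorem pillar_eq_union {a b k : ℝ} (ha : 0 < a) (hb : 0 < b) (hab : a ≤ b) (hbk : b ≤ k * a) :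
    {z : ℝ × ℝ | (0 ≤ z.1 ∧ z.1 ≤ a * b) ∧ (a * b ≤ z.2 ∧ z.2 ≤ k * (a * b)) ∧
        b * z.1 ≤ a * z.2} =
      Set.Icc 0 (a * a) ×ˢ Set.Icc (a * b) (b * b) ∪
      {z | a * a ≤ z.1 ∧ z.2 ≤ b * b ∧ b * (z.1 - a * a) ≤ a * (z.2 - a * b)} ∪
      Set.Icc 0 (a * b) ×ˢ Set.Icc (b * b) (k * (a * b)) := by
  ext ⟨x, y⟩
  simp only [Set.mem_union, Set.mem_ofPred_eq, Set.mem_prod, Set.mem_Icc]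
  constructor
  · rintro ⟨⟨h₁, h₂⟩, ⟨h₃, h₄⟩, h₅⟩
    rcases le_total y (b * b) with h₆ | h₆
    · rcases le_total x (a * a) with h₇ | h₇
      · exact .inl (.inl ⟨⟨h₁, h₇⟩, h₃, h₆⟩)
      · exact .inl (.inr ⟨h₇, h₆, by linarith⟩)
    · exact .inr ⟨⟨h₁, h₂⟩, h₆, h₄⟩
  · rintro ((⟨⟨h₁, h₂⟩, h₃, h₄⟩ | ⟨h₁, h₂, h₃⟩) | ⟨⟨h₁, h₂⟩, h₃, h₄⟩)
    · refine ⟨⟨h₁, ?_⟩, ⟨h₃, ?_⟩, ?_⟩ <;> nlinarith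
    · refine ⟨⟨?_, ?_⟩, ⟨?_, ?_⟩, ?_⟩ <;> nlinarith
    · refine ⟨⟨h₁, h₂⟩, ⟨?_, h₄⟩, ?_⟩ <;> nlinarith

namespace IsUnionOfTriangles

variable {a b c : ℕ} (ha : 0 < a) (hb : 0 < b) (h : c ^ 2 = a ^ 2 + b ^ 2 + a * b)

include ha hb h

theorem eisenstein_image_pillar {k : ℕ} (hab : a < b) (hbk : b < k * a) {t : ℕ}
    (ht : a ^ 2 + b ^ 2 + t = 2 * k * a * b) :
    IsUnionOfTriangles a b c t (eisenstein '' {z | (0 ≤ z.1 ∧ z.1 ≤ a * b) ∧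
      (a * b ≤ z.2 ∧ z.2 ≤ k * (a * b)) ∧ b * z.1 ≤ a * z.2}) := by
  have hR : (c : ℝ) ^ 2 = a ^ 2 + b ^ 2 + a * b := by exact_mod_cast h
  obtain ⟨d, hd⟩ := Nat.exists_eq_add_of_lt hab
  obtain ⟨e, he⟩ := Nat.exists_eq_add_of_lt hbk
  have ha' : (0 : ℝ) < a := by positivity
  have hb' : (0 : ℝ) < b := by positivity
  have lower := eisenstein_image_Icc_prod_Icc ha' hb' c.cast_nonneg hR ha
    (Nat.le_add_left 1 d) 0 (a * b)
  have triangle := (eisenstein_image_axisTriangle hb' ha' c.cast_nonneg (by linarith)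
    (Nat.le_add_left 1 d) (a * b) (a * a)).eisenstein_image_preimage_swap.swap
  have upper := eisenstein_image_Icc_prod_Icc ha' hb' c.cast_nonneg hR hb
    (Nat.le_add_left 1 e) 0 (b * b)
  convert (lower.eisenstein_image_of_eq_union triangle rfl).eisenstein_image_of_eq_union
    upper ?_ using 1
  · zify at ht hd he ⊢
    linear_combination ht + 2 * b * he + (b + a + d + 1) * hd
  · rw [pillar_eq_union ha' hb' (by exact_mod_cast hab.le) (by exact_mod_cast hbk.le)]
    have hdR : (a * b + (d + 1) * b : ℝ) = b * b := by
      rw [← add_mul, ← add_assoc]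
      exact_mod_cast congrArg (· * b) hd.symm
    have heR : (b * b + (e + 1) * b : ℝ) = k * (a * b) := by
      rw [← add_mul, ← add_assoc, ← mul_assoc]
      exact_mod_cast congrArg (· * b) he.symm
    push_cast
    rw [hdR, heR, zero_add, zero_add, mul_comm (b : ℝ) a]
    rfl

theorem eisenstein_image_left {n : ℕ} (hn : 1 ≤ n) (hab : a < b) (hbk : b < (n + 1) * a) :
    IsUnionOfTriangles a b c ((2 * n + 3) * (a * b) + n * (n + 2) * (b * (a + b)))
      (eisenstein '' {z | 0 ≤ a * z.1 + (a + b) * z.2 ∧ b * z.1 ≤ a * z.2 ∧ z.1 ≤ a * b ∧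
        z.2 ≤ (n + 1) * (a * b)}) := by
  obtain ⟨t, ht⟩ := Nat.exists_eq_add_of_le
    (show a ^ 2 + b ^ 2 ≤ 2 * (n + 1) * a * b by nlinarith)
  have pillar := eisenstein_image_pillar ha hb h hab hbk ht.symm
  have bisectorTriangle := eisenstein_image_bisectorTriangle ha hb h 0 0
  have levels := eisenstein_image_levels ha hb h (m := 0) (by omega) hn
  convert (bisectorTriangle.eisenstein_image_of_eq_union levels rfl).eisenstein_image_of_eq_union
    pillar ?_ using 1
  · zify at h ht ⊢
    linear_combination ht - h
  · ext ⟨x, y⟩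
    simp only [Set.mem_union, Set.mem_ofPred_eq]
    push_cast
    have hb' : (0 : ℝ) < b := by positivity
    have hn' : (0 : ℝ) ≤ n * (a * b) := by positivity
    constructor
    · rintro ⟨h₁, h₂, h₃, h₄⟩
      rcases le_total y (a * b) with h₅ | h₅
      · exact .inl (.inl ⟨by linarith, by linarith, by linarith⟩)
      rcases le_total x 0 with h₆ | h₆
      · exact .inl (.inr ⟨h₅, h₄, h₁, by linarith⟩)
      · exact .inr ⟨⟨h₆, h₃⟩, ⟨h₅, h₄⟩, h₂⟩
    · rintro ((⟨h₁, h₂, h₃⟩ | ⟨h₁, h₂, h₃, h₄⟩) | ⟨⟨h₁, h₂⟩, ⟨h₃, h₄⟩, h₅⟩)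
      · refine ⟨by linarith, by linarith, le_of_mul_le_mul_left ?_ hb', by linarith⟩
        have : (a : ℝ) ≤ b := by exact_mod_cast hab.le
        have : (a * b * a : ℝ) ≤ a * b * b := by gcongr
        nlinarith
      · have hx : x ≤ 0 := by linarith
        have hy : 0 ≤ y := le_trans (by positivity) h₁
        exact ⟨h₃, (mul_nonpos_of_nonneg_of_nonpos hb'.le hx).trans (by positivity),
          hx.trans (by positivity), h₂⟩
      · refine ⟨?_, h₅, h₂, h₄⟩
        nlinarith

theorem eisenstein_image_right {n : ℕ} (hn : 1 ≤ n) (hbn : b < (n + 1) * a) :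
    IsUnionOfTriangles a b c (c ^ 2 + n * (2 * ((n + 1) * a) * b + (n + 2) * (a * (a + b))))
      (eisenstein '' {z | 0 ≤ (a + b) * z.1 + b * z.2 ∧ (a * z.2 ≤ b * z.1 ∨ a * b ≤ z.1) ∧
        z.1 ≤ (n + 1) * (a * b) ∧ z.2 ≤ (n + 1) * (a * b)}) := by
  have h' : c ^ 2 = b ^ 2 + a ^ 2 + b * a := h.trans (by ring)
  have bisectorTriangle :=
    (eisenstein_image_bisectorTriangle hb ha h' 0 0).eisenstein_image_preimage_swap.swap
  have levels := (eisenstein_image_levels hb ha h' (m := (n + 1) * a) (by omega)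
    hn).eisenstein_image_preimage_swap.swap
  convert bisectorTriangle.eisenstein_image_of_eq_union levels ?_ using 1
  · ring
  · ext ⟨x, y⟩
    simp only [Set.mem_union, Set.mem_preimage, Prod.fst_swap, Prod.snd_swap, Set.mem_ofPred_eq]
    push_cast
    have ha' : (0 : ℝ) < a := by positivity
    have hn' : (0 : ℝ) ≤ n * (a * b) := by positivity
    have hbn' : (b : ℝ) ≤ (n + 1) * a := by exact_mod_cast hbn.le
    constructor
    · rintro ⟨h₁, h₂, h₃, h₄⟩
      by_cases h₅ : a * b ≤ x
      · exact .inr ⟨by linarith, by linarith, by linarith, by linarith⟩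
      · have h₆ := h₂.resolve_right h₅
        exact .inl ⟨by linarith, by linarith, by linarith⟩
    · rintro (⟨h₁, h₂, h₃⟩ | ⟨h₁, h₂, h₃, h₄⟩)
      · refine ⟨by linarith, .inl (by linarith), by linarith, le_of_mul_le_mul_left ?_ ha'⟩
        have : (a * b * b : ℝ) ≤ a * b * ((n + 1) * a) := by gcongr
        nlinarith
      · exact ⟨by linarith, .inr (by linarith), by linarith, by linarith⟩

end IsUnionOfTriangles

end Assembly

section IncenteredTriangle

/-- The triangle with sides `k a (a + 2b)`, `k b (b + 2a)`, `k (a² + b² + ab)` and incenter `0`, in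
the coordinates of `eisenstein`, with the first two sides parallel to the axes. -/
def incenteredTriangle (a b k : ℝ) : Set (ℝ × ℝ) :=
  convexHull ℝ {(-(k * b * (a + b)), k * a * b), (k * a * b, -(k * a * (a + b))),
    (k * a * b, k * a * b)}

variable {a b c k : ℝ}

theorem mem_incenteredTriangle (ha : 0 < a) (hb : 0 < b) (hk : 0 < k) {z : ℝ × ℝ} :
    z ∈ incenteredTriangle a b k ↔ z.1 ≤ k * (a * b) ∧ z.2 ≤ k * (a * b) ∧
      -(k * (a * b) * (a ^ 2 + b ^ 2 + a * b)) ≤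
        a * (a + 2 * b) * z.1 + b * (b + 2 * a) * z.2 := by
  have hp : 0 < k * (a * (a + 2 * b)) := by positivity
  have hq : 0 < k * (b * (b + 2 * a)) := by positivity
  rw [incenteredTriangle, mem_convexHull_triple_iff_wedge
    ((mul_pos hp hq).trans_eq (by simp [wedge]; ring))]
  simp only [wedge, Prod.fst_sub, Prod.snd_sub]
  constructor <;> rintro ⟨h₁, h₂, h₃⟩ <;> refine ⟨?_, ?_, ?_⟩ <;> nlinarith

theorem neg_mul_le_of_bisector {x y t : ℝ} (ha : 0 < a) (hb : 0 < b) (hy : y ≤ t)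
    (hp : 0 ≤ a * x + (a + b) * y) :
    -(t * (a ^ 2 + b ^ 2 + a * b)) ≤ a * (a + 2 * b) * x + b * (b + 2 * a) * y :=
  calc -(t * (a ^ 2 + b ^ 2 + a * b)) ≤ -(y * (a ^ 2 + b ^ 2 + a * b)) := by gcongr
    _ ≤ (a + 2 * b) * (a * x + (a + b) * y) - y * (a ^ 2 + b ^ 2 + a * b) := by
      rw [← zero_sub]
      gcongr
      positivity
    _ = a * (a + 2 * b) * x + b * (b + 2 * a) * y := by ring

theorem incenteredTriangle_eq_union (ha : 0 < a) (hb : 0 < b) (hk : 1 ≤ k) :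
    incenteredTriangle a b k =
      {z | a * z.1 + (a + b) * z.2 ≤ 0 ∧ (a + b) * z.1 + b * z.2 ≤ 0 ∧
        -(k * (a * b) * (a ^ 2 + b ^ 2 + a * b)) ≤
          a * (a + 2 * b) * z.1 + b * (b + 2 * a) * z.2} ∪
      {z | 0 ≤ a * z.1 + (a + b) * z.2 ∧ b * z.1 ≤ a * z.2 ∧ z.1 ≤ a * b ∧ z.2 ≤ k * (a * b)} ∪
      {z | 0 ≤ (a + b) * z.1 + b * z.2 ∧ (a * z.2 ≤ b * z.1 ∨ a * b ≤ z.1) ∧ z.1 ≤ k * (a * b) ∧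
        z.2 ≤ k * (a * b)} := by
  ext ⟨x, y⟩
  rw [mem_incenteredTriangle ha hb (by positivity)]
  simp only [Set.mem_union, Set.mem_ofPred_eq]
  set p := a * x + (a + b) * y with hp
  set q := (a + b) * x + b * y with hq
  set D := a ^ 2 + b ^ 2 + a * b with hD
  have hD₀ : 0 < D := by positivity
  have hx : D * x = (a + b) * q - b * p := by simp only [hp, hq, hD]; ring
  have hy : D * y = (a + b) * p - a * q := by simp only [hp, hq, hD]; ring
  have hab : a * b ≤ k * (a * b) := le_mul_of_one_le_left (by positivity) hk
  constructor
  · rintro ⟨h₁, h₂, h₃⟩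
    rcases le_total p 0 with hp₀ | hp₀ <;> rcases le_total q 0 with hq₀ | hq₀
    · exact .inl (.inl ⟨hp₀, hq₀, h₃⟩)
    · have hx₀ : 0 ≤ x := nonneg_of_mul_nonneg_right (by rw [hx]; nlinarith) hD₀
      have hy₀ : y ≤ 0 := nonpos_of_mul_nonpos_right (by rw [hy]; nlinarith) hD₀
      have hxy : a * y ≤ b * x :=
        (mul_nonpos_of_nonneg_of_nonpos ha.le hy₀).trans (mul_nonneg hb.le hx₀)
      exact .inr ⟨hq₀, .inl hxy, h₁, h₂⟩
    · have hx₀ : x ≤ 0 := nonpos_of_mul_nonpos_right (by rw [hx]; nlinarith) hD₀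
      have hy₀ : 0 ≤ y := nonneg_of_mul_nonneg_right (by rw [hy]; nlinarith) hD₀
      have hxy : b * x ≤ a * y :=
        (mul_nonpos_of_nonneg_of_nonpos hb.le hx₀).trans (mul_nonneg ha.le hy₀)
      exact .inl (.inr ⟨hp₀, hxy, hx₀.trans (by positivity), h₂⟩)
    · by_cases hxy : b * x ≤ a * y ∧ x ≤ a * b
      · exact .inl (.inr ⟨hp₀, hxy.1, hxy.2, h₂⟩)
      · exact .inr ⟨hq₀, by grind, h₁, h₂⟩
  · rintro ((⟨h₁, h₂, h₃⟩ | ⟨h₁, -, h₃, h₄⟩) | ⟨h₁, -, h₃, h₄⟩)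
    · refine ⟨?_, ?_, h₃⟩ <;> nlinarith
    · exact ⟨h₃.trans hab, h₄, neg_mul_le_of_bisector ha hb h₄ h₁⟩
    · refine ⟨h₃, h₄, ?_⟩
      linarith [neg_mul_le_of_bisector hb ha h₃ (by linarith : 0 ≤ b * y + (b + a) * x)]

theorem isTriangle_eisenstein_image_incenteredTriangle (ha : 0 < a) (hb : 0 < b) (hk : 0 < k)
    (h : c ^ 2 = a ^ 2 + b ^ 2 + a * b) :
    IsTriangle ((a + 2 * b) * (k * a)) ((b + 2 * a) * (k * b)) (k * c ^ 2)
      (eisenstein '' incenteredTriangle a b k) := by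
  refine isTriangle_eisenstein_image (by positivity) (by positivity) (by positivity) ?_ ?_ ?_
  all_goals simp only [eisensteinNorm, Prod.mk_sub_mk, h]; ring

theorem isTriangle_eisenstein_image_axisTriangle (ha : 0 < a) (hb : 0 < b) (hc : 0 < c)
    (h : c ^ 2 = a ^ 2 + b ^ 2 + a * b) :
    IsTriangle a b c (eisenstein '' convexHull ℝ {(0, -b), (a, 0), (0, 0)}) := by
  refine isTriangle_eisenstein_image (by positivity) (by positivity) (by positivity) ?_ ?_ ?_
  all_goals simp only [eisensteinNorm, Prod.mk_sub_mk, h]; ring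

open MeasureTheory in
theorem volume_eisenstein_image_incenteredTriangle (ha : 0 < a) (hb : 0 < b) (hk : 0 < k) :
    volume (eisenstein '' incenteredTriangle a b k) =
      ENNReal.ofReal ((a + 2 * b) * (b + 2 * a) * k ^ 2) *
        volume (eisenstein '' convexHull ℝ {(0, -b), (a, 0), (0, 0)}) := by
  rw [incenteredTriangle, volume_eisenstein_image_convexHull_triple,
    volume_eisenstein_image_convexHull_triple (0, -b), ← mul_assoc,
    ← ENNReal.ofReal_mul (by positivity)]
  congr 2
  simp only [wedge, Prod.mk_sub_mk]
  rw [abs_of_nonneg (by ring_nf; positivity), abs_of_nonneg (by ring_nf; positivity)]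
  ring

end IncenteredTriangle

namespace IsUnionOfTriangles

variable {a b c : ℕ} (ha : 0 < a) (hb : 0 < b) (h : c ^ 2 = a ^ 2 + b ^ 2 + a * b)

include ha hb h

theorem eisenstein_image_center {k : ℕ} (hk : 1 ≤ k) :
    IsUnionOfTriangles a b c ((k * c) ^ 2) (eisenstein '' {z | a * z.1 + (a + b) * z.2 ≤ 0 ∧
      (a + b) * z.1 + b * z.2 ≤ 0 ∧ -(k * (a * b) * (a ^ 2 + b ^ 2 + a * b)) ≤
        a * (a + 2 * b) * z.1 + b * (b + 2 * a) * z.2}) := by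
  have hR : (c : ℝ) ^ 2 = a ^ 2 + b ^ 2 + a * b := by exact_mod_cast h
  have hc : 0 < c := pos_of_sq_eq ha h
  convert eisenstein_image_convexHull (p := a) (q := b) (r := c) (by positivity) (by positivity)
    (by positivity) (Nat.mul_pos hk hc) (P := (-(k * b * (a + b)), k * a * b))
    (Q := (k * a * b, -(k * a * (a + b)))) (R := (0, 0)) ?_ ?_ ?_ using 2
  · ext z
    have hwedge : 0 < (k * c) ^ 2 * (a * b : ℝ) := by positivity
    rw [mem_convexHull_triple_iff_wedge (hwedge.trans_eq (by simp [wedge, mul_pow, hR]; ring))]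
    simp only [wedge, Set.mem_ofPred_eq, Prod.fst_sub, Prod.snd_sub]
    have hka : (0 : ℝ) < k * a := by positivity
    have hkb : (0 : ℝ) < k * b := by positivity
    constructor <;> rintro ⟨h₁, h₂, h₃⟩ <;> refine ⟨?_, ?_, ?_⟩ <;> nlinarith
  all_goals simp only [eisensteinNorm, Prod.mk_sub_mk, mul_pow, Nat.cast_mul, hR]; ring

theorem eisenstein_image_incenteredTriangle {n : ℕ} (hn : 1 ≤ n) (hab : a < b)
    (hbn : b < (n + 1) * a) :
    IsUnionOfTriangles a b c ((a + 2 * b) * (b + 2 * a) * (n + 1) ^ 2)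
      (eisenstein '' incenteredTriangle a b (n + 1)) := by
  have center := eisenstein_image_center ha hb h (Nat.le_add_left 1 n)
  have left := eisenstein_image_left ha hb h hn hab hbn
  have right := eisenstein_image_right ha hb h hn hbn
  convert (center.eisenstein_image_of_eq_union left rfl).eisenstein_image_of_eq_union right
    ?_ using 1
  · zify at h ⊢
    linear_combination (-(n + 1) ^ 2 - 1) * h
  · rw [incenteredTriangle_eq_union (by positivity) (by positivity) (by linarith)]
    push_cast
    rfl

end IsUnionOfTriangles

section Arithmetic

variable {a b c : ℕ}

theorem not_dvd_of_sq_eq (ha : 0 < a) (hb : 0 < b) (h : c ^ 2 = a ^ 2 + b ^ 2 + a * b) :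
    ¬ a ∣ b := by
  rintro ⟨t, rfl⟩
  obtain ⟨s, rfl⟩ : a ∣ c :=
    (Nat.pow_dvd_pow_iff two_ne_zero).1 ⟨1 + t ^ 2 + t, h.trans (by ring)⟩
  have ht : 0 < t := pos_of_mul_pos_right hb a.zero_le
  have hs : s ^ 2 = 1 + t ^ 2 + t :=
    Nat.eq_of_mul_eq_mul_left (pow_pos ha 2) (by linear_combination h)
  have lower : t < s := lt_of_pow_lt_pow_left₀ 2 s.zero_le (by linarith)
  have upper : s < t + 1 := lt_of_pow_lt_pow_left₀ 2 (t + 1).zero_le (by linarith)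
  omega

theorem le_sq_of_sq_eq (hb : 0 < b) (h : c ^ 2 = a ^ 2 + b ^ 2 + a * b) : a ≤ b ^ 2 := by
  have hc : 2 * a + b < 2 * c := lt_of_pow_lt_pow_left₀ 2 (2 * c).zero_le (by nlinarith)
  nlinarith

end Arithmetic

section Main

variable {a b c k : ℕ}

theorem IsTriangle.isUnionOfTriangles_of_sq_eq (ha : 0 < a) (hb : 0 < b)
    (h : c ^ 2 = a ^ 2 + b ^ 2 + a * b) (hbk : b ≤ k * a) (hak : a ≤ k * b) {Δ : Set Plane}
    (hΔ : IsTriangle ((a + 2 * b) * (k * a)) ((b + 2 * a) * (k * b)) (k * c ^ 2) Δ) :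
    IsUnionOfTriangles a b c ((a + 2 * b) * (b + 2 * a) * k ^ 2) Δ := by
  wlog hab : a ≤ b generalizing a b
  · rw [mul_comm (a + 2 * b)]
    exact (this hb ha (h.trans (by ring)) hak hbk hΔ.swap (le_of_not_ge hab)).swap
  have a_not_dvd_b := not_dvd_of_sq_eq ha hb h
  have hab : a < b := hab.lt_of_ne fun e ↦ a_not_dvd_b (dvd_of_eq e)
  have hbk : b < k * a := hbk.lt_of_ne fun e ↦ a_not_dvd_b ⟨k, e.trans (mul_comm k a)⟩
  have hk : 1 < k := lt_of_mul_lt_mul_right (by linarith) a.zero_le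
  obtain ⟨n, rfl⟩ := Nat.exists_eq_add_of_le' hk.le
  have hR : (c : ℝ) ^ 2 = a ^ 2 + b ^ 2 + a * b := by exact_mod_cast h
  obtain ⟨f, rfl⟩ := (isTriangle_eisenstein_image_incenteredTriangle (by positivity)
    (by positivity) n.cast_add_one_pos hR).exists_image_eq (by exact_mod_cast hΔ)
  exact (IsUnionOfTriangles.eisenstein_image_incenteredTriangle ha hb h (by omega) hab hbk).image f

end Main

theorem stmt9_general (a b c k : ℕ) (ha : 0 < a) (hb : 0 < b) (h : c ^ 2 = a ^ 2 + b ^ 2 + a * b)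
    (hbk : b ≤ k * a) (hak : a ≤ k * b) :
    ∀ Δ : Set Plane,
      IsTriangle ((a + 2 * b) * (k * a)) ((b + 2 * a) * (k * b)) (k * c ^ 2) Δ →
      TilesInto Δ ((a + 2 * b) * (b + 2 * a) * k ^ 2) a b c := by
  intro Δ hΔ
  have ha' : (0 : ℝ) < a := by positivity
  have hb' : (0 : ℝ) < b := by positivity
  have hc' : (0 : ℝ) < c := Nat.cast_pos.2 (pos_of_sq_eq ha h)
  have hk' : (0 : ℝ) < k := Nat.cast_pos.2 (pos_of_mul_pos_left (hb.trans_le hbk) a.zero_le)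
  have hR : (c : ℝ) ^ 2 = a ^ 2 + b ^ 2 + a * b := by exact_mod_cast h
  refine (hΔ.isUnionOfTriangles_of_sq_eq ha hb h hbk hak).tilesInto
    (isTriangle_eisenstein_image_axisTriangle ha' hb' hc' hR) (le_of_eq ?_)
  rw [hΔ.volume_eq (isTriangle_eisenstein_image_incenteredTriangle ha' hb' hk' hR),
    volume_eisenstein_image_incenteredTriangle ha' hb' hk']
  congr 1
  rw [← ENNReal.ofReal_natCast]
  push_cast
  rfl

theorem stmt9 (a b c : ℕ) (ha : 0 < a) (hb : 0 < b) (hc : 0 < c)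
    (hab : Nat.Coprime a b) (hac : Nat.Coprime a c) (hbc : Nat.Coprime b c)
    (h : c ^ 2 = a ^ 2 + b ^ 2 + a * b) (m : ℕ) (hm : 1 ≤ m) :
    ∀ Δ : Set Plane,
      IsTriangle (((a : ℝ) + 2 * b) * m * a * b) (((b : ℝ) + 2 * a) * m * b ^ 2)
        ((m : ℝ) * b * c ^ 2) Δ →
      TilesInto Δ ((a + 2 * b) * (b + 2 * a) * m ^ 2 * b ^ 2) a b c := by
  intro Δ hΔ
  have hb_le : b ≤ m * b * a := by nlinarith [Nat.mul_pos hm ha]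
  have ha_le : a ≤ m * b * b := by nlinarith [le_sq_of_sq_eq hb h]
  rw [mul_assoc _ (m ^ 2), ← mul_pow]
  refine stmt9_general a b c (m * b) ha hb h hb_le ha_le Δ ?_
  convert hΔ using 1 <;> push_cast <;> ring
end
end
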